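/- arXiv:2105.12199 — 2 statements merged into one kernel-verified Lean document; each statement's English description precedes it below -/
import Mathlib

section
/- Let A be a C*-algebra. The Lebesgue decomposition of positive functionals over A is unique if and only if for every closed *-subalgebra B of A the Lebesgue decomposition of positive functionals over B is unique. -/
open scoped ComplexOrder

section CStarDefs

variable {A : Type} [NonUnitalCStarAlgebra A]

/-- A linear functional on a C⋆-algebra is positive if `0 ≤ f (a⋆ * a)` for every `a`. -/
def IsPosFnC (f : A →ₗ[ℂ] ℂ) : Prop := ∀ a : A, 0 ≤ f (star a * a)

/-- Order on positive functionals: `f ≤ g` iff `g - f` is positive. -/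
def FnLEC (f g : A →ₗ[ℂ] ℂ) : Prop := IsPosFnC (g - f)

/-- Absolute continuity `f ≪ g` for positive functionals on a C⋆-algebra: `f` is the
pointwise limit of an increasing sequence of positive functionals `fₙ` with `fₙ ≤ αₙ • g`
for some positive reals `αₙ`. -/
def AbsContC (f g : A →ₗ[ℂ] ℂ) : Prop :=
  ∃ (fn : ℕ → (A →ₗ[ℂ] ℂ)) (α : ℕ → ℝ),
    (∀ n, IsPosFnC (fn n)) ∧
    (∀ n, 0 < α n) ∧
    (∀ n, FnLEC (fn n) (fn (n + 1))) ∧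
    (∀ n, FnLEC (fn n) (((α n : ℂ)) • g)) ∧
    (∀ a : A, Filter.Tendsto (fun n => fn n a) Filter.atTop (nhds (f a)))

/-- Singularity `f ⊥ g`: the only positive functional dominated by both `f` and `g`
is `0`. -/
def SingularC (f g : A →ₗ[ℂ] ℂ) : Prop :=
  ∀ p : A →ₗ[ℂ] ℂ, IsPosFnC p → FnLEC p f → FnLEC p g → p = 0

/-- `f = fr + fs` is a Lebesgue decomposition of `f` with respect to `g`. -/
def IsLebDecompC (f g fr fs : A →ₗ[ℂ] ℂ) : Prop :=
  IsPosFnC fr ∧ IsPosFnC fs ∧ f = fr + fs ∧ AbsContC fr g ∧ SingularC fs g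

/-- The Lebesgue decomposition of `f` with respect to `g` is unique. -/
def LebDecompUniqueForC (f g : A →ₗ[ℂ] ℂ) : Prop :=
  ∀ fr fs fr' fs' : A →ₗ[ℂ] ℂ, IsLebDecompC f g fr fs → IsLebDecompC f g fr' fs' →
    fr = fr' ∧ fs = fs'

end CStarDefs

/-- The Lebesgue decomposition of positive functionals over the C⋆-algebra `A` is unique. -/
def LebDecompUniqueC (A : Type) [NonUnitalCStarAlgebra A] : Prop :=
  ∀ f g : A →ₗ[ℂ] ℂ, IsPosFnC f → IsPosFnC g → LebDecompUniqueForC f g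

/-!
Only the passage from `A` to a subalgebra `B` needs an argument. Let `f`, `g` be positive on `B`,
let `ξ` be the GNS vector of `f + g` and `T` the Radon–Nikodym operator of `g` with respect to it.
There is a vector `w` in the kernel of `T` such that every Lebesgue decomposition `f = r + s` has
the form `s (a⋆ a) = ⟪π a ξ, π a (η + w)⟫`, where `η` is a limit of vectors whose vector functionals
are `g`-dominated, while the vector functional of `η` itself lies below `s` and so is `g`-singular.
Thus `s` is determined by `f` and `g` as soon as `η = 0`.

To see this, extend the vector functional of `ξ` from `B` to `A`, so that the representation of `B`
sits inside one of `A`, and write `η = lim u n` with `g`-dominated `u n`. Choose `G` positive on `A`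
that dominates the vector functionals over `A` of all `u n` and whose restriction to `B` is
`g`-dominated. The vector functional `ω` of `η` over `A` is `G`-singular. On the other hand, if
`u n` converges fast enough, then the amounts by which the vector functionals of `u n` fail to
increase with `n` have a finite sum `P`, and both `P` and `P + ω` are absolutely continuous with
respect to `G`. So `P + ω` has the decompositions `(P + ω) + 0` and `P + ω`, and uniqueness over `A`
forces `ω = 0`.
-/

open Filter Topology

section PositiveFunctionals

variable {A B : Type} [NonUnitalCStarAlgebra A] [NonUnitalCStarAlgebra B]
  {f g h p q : A →ₗ[ℂ] ℂ}

theorem eq_of_forall_star_mul_self_eq (hpq : ∀ a, p (star a * a) = q (star a * a)) : p = q := by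
  let _ := CStarAlgebra.spectralOrder A
  let _ := CStarAlgebra.spectralOrderedRing A
  ext x
  obtain ⟨y, hy, -, rfl⟩ := CStarAlgebra.exists_sum_four_nonneg x
  simp only [map_sum, map_smul]
  refine Finset.sum_congr rfl fun i _ => ?_
  obtain ⟨b, hb⟩ := CStarAlgebra.nonneg_iff_eq_star_mul_self.1 (hy i)
  rw [hb, hpq]

theorem fnLEC_iff : FnLEC p q ↔ ∀ a, p (star a * a) ≤ q (star a * a) :=
  forall_congr' fun _ => sub_nonneg

theorem FnLEC.refl (p : A →ₗ[ℂ] ℂ) : FnLEC p p :=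
  fnLEC_iff.2 fun _ => le_rfl

theorem FnLEC.trans (hpq : FnLEC p q) (hqh : FnLEC q h) : FnLEC p h :=
  fnLEC_iff.2 fun a => (fnLEC_iff.1 hpq a).trans (fnLEC_iff.1 hqh a)

theorem FnLEC.smul (hpq : FnLEC p q) {c : ℝ} (hc : 0 ≤ c) : FnLEC ((c : ℂ) • p) ((c : ℂ) • q) :=
  fnLEC_iff.2 fun a => mul_le_mul_of_nonneg_left (fnLEC_iff.1 hpq a) (Complex.zero_le_real.2 hc)

theorem FnLEC.comp (hpq : FnLEC p q) (j : B →⋆ₙₐ[ℂ] A) :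
    FnLEC (p ∘ₗ (j : B →ₗ[ℂ] A)) (q ∘ₗ (j : B →ₗ[ℂ] A)) :=
  fnLEC_iff.2 fun b => by simpa [map_star] using fnLEC_iff.1 hpq (j b)

namespace IsPosFnC

theorem zero : IsPosFnC (0 : A →ₗ[ℂ] ℂ) := fun _ => le_rfl

theorem add (hp : IsPosFnC p) (hq : IsPosFnC q) : IsPosFnC (p + q) :=
  fun a => add_nonneg (hp a) (hq a)

theorem sum {ι : Type*} {p : ι → A →ₗ[ℂ] ℂ} {s : Finset ι} (hp : ∀ i ∈ s, IsPosFnC (p i)) :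
    IsPosFnC (∑ i ∈ s, p i) := fun a => by
  simpa using Finset.sum_nonneg fun i hi => hp i hi a

theorem smul (hp : IsPosFnC p) {c : ℝ} (hc : 0 ≤ c) : IsPosFnC ((c : ℂ) • p) :=
  fun a => mul_nonneg (Complex.zero_le_real.2 hc) (hp a)

theorem comp (hp : IsPosFnC p) (j : B →⋆ₙₐ[ℂ] A) : IsPosFnC (p ∘ₗ (j : B →ₗ[ℂ] A)) :=
  fun b => by simpa [map_star] using hp (j b)

theorem fnLEC_add_right (hq : IsPosFnC q) : FnLEC p (p + q) := by
  rwa [FnLEC, add_sub_cancel_left]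

theorem smul_fnLEC_smul (hp : IsPosFnC p) {c d : ℝ} (hcd : c ≤ d) :
    FnLEC ((c : ℂ) • p) ((d : ℂ) • p) :=
  fnLEC_iff.2 fun a => mul_le_mul_of_nonneg_right (Complex.real_le_real.2 hcd) (hp a)

theorem eq_zero_of_fnLEC_zero (hp : IsPosFnC p) (h0 : FnLEC p 0) : p = 0 :=
  eq_of_forall_star_mul_self_eq fun a => le_antisymm (fnLEC_iff.1 h0 a) (hp a)

theorem apply_nonneg [PartialOrder A] [StarOrderedRing A] (hp : IsPosFnC p) {a : A} (ha : 0 ≤ a) :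
    0 ≤ p a := by
  obtain ⟨b, rfl⟩ := CStarAlgebra.nonneg_iff_eq_star_mul_self.1 ha
  exact hp b

theorem exists_norm_apply_le (hp : IsPosFnC p) : ∃ C : ℝ, 0 ≤ C ∧ ∀ a, ‖p a‖ ≤ C * ‖a‖ := by
  let _ := CStarAlgebra.spectralOrder A
  let _ := CStarAlgebra.spectralOrderedRing A
  obtain ⟨C, hC⟩ :=
    (PositiveLinearMap.mk₀ (R := ℂ) p fun _ => hp.apply_nonneg).exists_norm_apply_le
  exact ⟨C, C.2, hC⟩

end IsPosFnC

/-- `p` is `g`-dominated: `p ≤ c • g` for some constant `c ≥ 0`. -/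
def IsDominatedBy (p g : A →ₗ[ℂ] ℂ) : Prop :=
  ∃ c : ℝ, 0 ≤ c ∧ FnLEC p ((c : ℂ) • g)

namespace IsDominatedBy

theorem zero (g : A →ₗ[ℂ] ℂ) : IsDominatedBy 0 g :=
  ⟨0, le_rfl, by simpa using FnLEC.refl 0⟩

theorem add (hp : IsDominatedBy p g) (hq : IsDominatedBy q g) : IsDominatedBy (p + q) g := by
  obtain ⟨c, hc, hpc⟩ := hp
  obtain ⟨d, hd, hqd⟩ := hq
  refine ⟨c + d, add_nonneg hc hd, fnLEC_iff.2 fun a => ?_⟩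
  simpa [add_mul] using add_le_add (fnLEC_iff.1 hpc a) (fnLEC_iff.1 hqd a)

theorem sum {ι : Type*} {p : ι → A →ₗ[ℂ] ℂ} {s : Finset ι} (hp : ∀ i ∈ s, IsDominatedBy (p i) g) :
    IsDominatedBy (∑ i ∈ s, p i) g :=
  Finset.sum_induction _ (IsDominatedBy · g) (fun _ _ => add) (zero g) hp

theorem smul (hp : IsDominatedBy p g) {c : ℝ} (hc : 0 ≤ c) : IsDominatedBy ((c : ℂ) • p) g := by
  obtain ⟨d, hd, hpd⟩ := hp
  refine ⟨c * d, mul_nonneg hc hd, fnLEC_iff.2 fun a => ?_⟩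
  simpa [mul_assoc] using mul_le_mul_of_nonneg_left (fnLEC_iff.1 hpd a) (Complex.zero_le_real.2 hc)

theorem of_fnLEC (hpq : FnLEC p q) (hq : IsDominatedBy q g) : IsDominatedBy p g :=
  let ⟨c, hc, hqc⟩ := hq
  ⟨c, hc, hpq.trans hqc⟩

theorem exists_one_le (hpg : IsDominatedBy p g) (hg : IsPosFnC g) :
    ∃ c : ℝ, 1 ≤ c ∧ FnLEC p ((c : ℂ) • g) :=
  let ⟨c, _, hpc⟩ := hpg
  ⟨max 1 c, le_max_left 1 c, hpc.trans (hg.smul_fnLEC_smul (le_max_right 1 c))⟩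

end IsDominatedBy

theorem FnLEC.isDominatedBy (hpg : FnLEC p g) : IsDominatedBy p g :=
  ⟨1, zero_le_one, by simpa using hpg⟩

theorem SingularC.mono_left (hfg : SingularC f g) (hpf : FnLEC p f) : SingularC p g :=
  fun q hq hqp hqg => hfg q hq (hqp.trans hpf) hqg

theorem SingularC.zero_left (g : A →ₗ[ℂ] ℂ) : SingularC 0 g :=
  fun _ hp hp0 _ => hp.eq_zero_of_fnLEC_zero hp0

theorem SingularC.eq_zero_of_isDominatedBy (hfg : SingularC f g) (hg : IsPosFnC g)
    (hp : IsPosFnC p) (hpf : FnLEC p f) (hpg : IsDominatedBy p g) : p = 0 := by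
  obtain ⟨c, hc, hpc⟩ := hpg.exists_one_le hg
  have hc0 : 0 < c := zero_lt_one.trans_le hc
  have hcp : ((c⁻¹ : ℝ) : ℂ) • p = 0 := by
    refine hfg _ (hp.smul (inv_nonneg.2 hc0.le)) ?_ ?_
    · exact FnLEC.trans (by simpa using hp.smul_fnLEC_smul (inv_le_one_of_one_le₀ hc)) hpf
    · simpa [-Complex.coe_smul, smul_smul, hc0.ne'] using hpc.smul (inv_nonneg.2 hc0.le)
  simpa [hc0.ne'] using hcp

theorem absContC_of_monotone_tendsto (hg : IsPosFnC g) {y : ℕ → A →ₗ[ℂ] ℂ}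
    (hy : ∀ n, IsPosFnC (y n)) (hmono : ∀ n, FnLEC (y n) (y (n + 1)))
    (hdom : ∀ n, IsDominatedBy (y n) g)
    (hlim : ∀ a, Tendsto (fun n => y n a) atTop (𝓝 (f a))) : AbsContC f g := by
  choose α hα hyα using fun n => (hdom n).exists_one_le hg
  exact ⟨y, α, hy, fun n => zero_lt_one.trans_le (hα n), hmono, hyα, hlim⟩

theorem fnLEC_of_monotone_tendsto {y : ℕ → A →ₗ[ℂ] ℂ} (hmono : ∀ n, FnLEC (y n) (y (n + 1)))
    (hlim : ∀ a, Tendsto (fun n => y n a) atTop (𝓝 (f a))) (n : ℕ) : FnLEC (y n) f :=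
  fnLEC_iff.2 fun a => Monotone.ge_of_tendsto
    (monotone_nat_of_le_succ fun n => fnLEC_iff.1 (hmono n) a) (hlim (star a * a)) n

theorem exists_hasSum_of_summable {p : ℕ → A →ₗ[ℂ] ℂ} (hp : ∀ a, Summable fun n => p n a) :
    ∃ X : A →ₗ[ℂ] ℂ, ∀ a, HasSum (fun n => p n a) (X a) :=
  ⟨{ toFun := fun a => ∑' n, p n a
     map_add' := fun a b => by simp only [map_add, (hp a).tsum_add (hp b)]
     map_smul' := fun c a => by
       simp only [map_smul, smul_eq_mul, tsum_mul_left, RingHom.id_apply] },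
    fun a => (hp a).hasSum⟩

theorem isPosFnC_of_hasSum {p : ℕ → A →ₗ[ℂ] ℂ} (hp : ∀ n, IsPosFnC (p n))
    (hf : ∀ a, HasSum (fun n => p n a) (f a)) : IsPosFnC f :=
  fun a => (hf (star a * a)).nonneg fun n => hp n a

theorem fnLEC_of_hasSum {p : ℕ → A →ₗ[ℂ] ℂ} (hp : ∀ n, IsPosFnC (p n))
    (hf : ∀ a, HasSum (fun n => p n a) (f a)) (n : ℕ) : FnLEC (p n) f :=
  fnLEC_iff.2 fun a => le_hasSum (hf (star a * a)) n fun m _ => hp m a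

theorem absContC_of_hasSum (hg : IsPosFnC g) {p : ℕ → A →ₗ[ℂ] ℂ} (hp : ∀ n, IsPosFnC (p n))
    (hpg : ∀ n, IsDominatedBy (p n) g) (hf : ∀ a, HasSum (fun n => p n a) (f a)) :
    AbsContC f g := by
  refine absContC_of_monotone_tendsto hg (y := fun n => ∑ i ∈ Finset.range n, p i)
    (fun n => .sum fun i _ => hp i) (fun n => ?_) (fun n => .sum fun i _ => hpg i) fun a => ?_
  · rw [Finset.sum_range_succ]
    exact (hp n).fnLEC_add_right
  · simpa using (hf a).tendsto_sum_nat

-- Adding the accumulated errors `∑ i < n, p i` to `q n` makes the sequence increasing.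
theorem absContC_add_of_fnLEC_add (hg : IsPosFnC g) {p q : ℕ → A →ₗ[ℂ] ℂ} {P Q : A →ₗ[ℂ] ℂ}
    (hp : ∀ n, IsPosFnC (p n)) (hq : ∀ n, IsPosFnC (q n))
    (hpg : ∀ n, IsDominatedBy (p n) g) (hqg : ∀ n, IsDominatedBy (q n) g)
    (hP : ∀ a, HasSum (fun n => p n a) (P a))
    (hQ : ∀ a, Tendsto (fun n => q n a) atTop (𝓝 (Q a)))
    (hqp : ∀ n, FnLEC (q n) (q (n + 1) + p n)) : AbsContC (P + Q) g := by
  refine absContC_of_monotone_tendsto hg (y := fun n => ∑ i ∈ Finset.range n, p i + q n)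
    (fun n => (IsPosFnC.sum fun i _ => hp i).add (hq n)) (fun n => fnLEC_iff.2 fun a => ?_)
    (fun n => (IsDominatedBy.sum fun i _ => hpg i).add (hqg n)) fun a => ?_
  · have hle := fnLEC_iff.1 (hqp n) a
    simp only [Finset.sum_range_succ, LinearMap.add_apply, LinearMap.sum_apply] at hle ⊢
    rw [add_assoc, add_comm (p n _)]
    gcongr
  · simpa using (hP a).tendsto_sum_nat.add (hQ a)

-- `P + Q` would have the two decompositions `(P + Q) + 0` and `P + Q`.
theorem LebDecompUniqueC.eq_zero_of_singularC (hA : LebDecompUniqueC A) (hg : IsPosFnC g)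
    (hp : IsPosFnC p) (hq : IsPosFnC q) (hpg : AbsContC p g) (hpqg : AbsContC (p + q) g)
    (hqg : SingularC q g) : q = 0 :=
  (hA (p + q) g (hp.add hq) hg (p + q) 0 p q
    ⟨hp.add hq, .zero, (add_zero _).symm, hpqg, .zero_left g⟩ ⟨hp, hq, rfl, hpg, hqg⟩).2.symm

-- `G = ∑ n, c n • p n` with `c n` so small that the series converges and stays below `g`.
theorem exists_isPosFnC_forall_isDominatedBy (j : B →⋆ₙₐ[ℂ] A) {p : ℕ → A →ₗ[ℂ] ℂ}
    {g : B →ₗ[ℂ] ℂ} (hg : IsPosFnC g) (hp : ∀ n, IsPosFnC (p n))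
    (hpg : ∀ n, IsDominatedBy (p n ∘ₗ (j : B →ₗ[ℂ] A)) g) :
    ∃ G : A →ₗ[ℂ] ℂ, IsPosFnC G ∧ (∀ n, IsDominatedBy (p n) G) ∧
      IsDominatedBy (G ∘ₗ (j : B →ₗ[ℂ] A)) g := by
  choose C hC0 hC using fun n => (hp n).exists_norm_apply_le
  choose d hd hpd using hpg
  let c : ℕ → ℝ := fun n => (1 / 2) ^ n / (1 + C n + d n)
  have hden : ∀ n, 0 < 1 + C n + d n := fun n => by linarith [hC0 n, hd n]
  have hc : ∀ n, 0 < c n := fun n => div_pos (by positivity) (hden n)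
  have hcle : ∀ n x, x ≤ 1 + C n + d n → c n * x ≤ (1 / 2) ^ n := fun n x hx => by
    rw [div_mul_eq_mul_div, div_le_iff₀ (hden n)]
    gcongr
  have hgeom : Summable fun n : ℕ => (1 / 2 : ℝ) ^ n := summable_geometric_two
  obtain ⟨G, hG⟩ := exists_hasSum_of_summable (p := fun n => (c n : ℂ) • p n) fun a => by
    refine .of_norm_bounded (hgeom.mul_right ‖a‖) fun n => ?_
    rw [LinearMap.smul_apply, norm_smul, Complex.norm_of_nonneg (hc n).le]
    calc c n * ‖p n a‖ ≤ c n * (C n * ‖a‖) := by gcongr; exacts [(hc n).le, hC n a]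
      _ = c n * C n * ‖a‖ := (mul_assoc _ _ _).symm
      _ ≤ (1 / 2) ^ n * ‖a‖ := by gcongr; exact hcle n _ (by linarith [hd n])
  have hcp : ∀ n, IsPosFnC ((c n : ℂ) • p n) := fun n => (hp n).smul (hc n).le
  refine ⟨G, isPosFnC_of_hasSum hcp hG, fun n => ?_, 2, zero_le_two, fnLEC_iff.2 fun b => ?_⟩
  · refine ⟨(c n)⁻¹, (inv_pos.2 (hc n)).le, ?_⟩
    simpa [-Complex.coe_smul, smul_smul, (hc n).ne'] using
      (fnLEC_of_hasSum hcp hG n).smul (inv_nonneg.2 (hc n).le)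
  · have hsum : HasSum (fun n : ℕ => (((1 / 2 : ℝ) ^ n : ℝ) : ℂ) * g (star b * b))
        (((2 : ℝ) : ℂ) * g (star b * b)) :=
      (Complex.hasSum_ofReal.2 hasSum_geometric_two).mul_right _
    refine hasSum_le (fun n => ?_) (hG (j (star b * b))) hsum
    calc (c n : ℂ) * p n (j (star b * b)) ≤ c n * (d n * g (star b * b)) :=
          mul_le_mul_of_nonneg_left (fnLEC_iff.1 (hpd n) b) (Complex.zero_le_real.2 (hc n).le)
      _ = ((c n * d n : ℝ) : ℂ) * g (star b * b) := by push_cast; ring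
      _ ≤ _ := mul_le_mul_of_nonneg_right
          (Complex.real_le_real.2 (hcle n _ (by linarith [hC0 n]))) (hg b)

end PositiveFunctionals

section Representations

variable {A : Type} [NonUnitalCStarAlgebra A]
  {H : Type*} [NormedAddCommGroup H] [InnerProductSpace ℂ H] [CompleteSpace H]
  (π : A →⋆ₙₐ[ℂ] (H →L[ℂ] H))

theorem inner_rep_apply_left (a : A) (u v : H) :
    inner ℂ (π a u) v = inner ℂ u (π (star a) v) := by
  rw [map_star, ContinuousLinearMap.star_eq_adjoint, ContinuousLinearMap.adjoint_inner_right]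

theorem rep_mul_apply (a b : A) (v : H) : π (a * b) v = π a (π b v) := by
  rw [map_mul, mul_apply_eq_comp]

theorem norm_rep_apply_le (a : A) (v : H) : ‖π a v‖ ≤ ‖a‖ * ‖v‖ :=
  (ContinuousLinearMap.le_opNorm _ _).trans
    (mul_le_mul_of_nonneg_right (NonUnitalStarAlgHom.norm_apply_le π a) (norm_nonneg v))

/-- The vector functional `a ↦ ⟪v, π a v⟫` of a vector `v` in a representation `π`. -/
noncomputable def vectorFunctional (v : H) : A →ₗ[ℂ] ℂ where
  toFun a := inner ℂ v (π a v)
  map_add' a b := by simp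
  map_smul' c a := by simp

theorem vectorFunctional_apply (v : H) (a : A) : vectorFunctional π v a = inner ℂ v (π a v) := rfl

theorem vectorFunctional_star_mul_self (v : H) (a : A) :
    vectorFunctional π v (star a * a) = ((‖π a v‖ ^ 2 : ℝ) : ℂ) := by
  rw [vectorFunctional_apply, rep_mul_apply, ← inner_rep_apply_left, inner_self_eq_norm_sq_to_K]
  norm_cast

theorem isPosFnC_vectorFunctional (v : H) : IsPosFnC (vectorFunctional π v) := fun a => by
  rw [vectorFunctional_star_mul_self]
  exact Complex.zero_le_real.2 (sq_nonneg _)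

theorem norm_vectorFunctional_apply_le (v : H) (a : A) :
    ‖vectorFunctional π v a‖ ≤ ‖a‖ * ‖v‖ ^ 2 :=
  calc ‖vectorFunctional π v a‖ ≤ ‖v‖ * (‖a‖ * ‖v‖) :=
        (norm_inner_le_norm _ _).trans (by gcongr; exact norm_rep_apply_le π a v)
    _ = ‖a‖ * ‖v‖ ^ 2 := by ring

theorem vectorFunctional_smul (c : ℂ) (v : H) :
    vectorFunctional π (c • v) = ((‖c‖ ^ 2 : ℝ) : ℂ) • vectorFunctional π v :=
  eq_of_forall_star_mul_self_eq fun a => by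
    simp [vectorFunctional_star_mul_self, norm_smul, mul_pow]

-- The parallelogram law.
theorem fnLEC_vectorFunctional_add (u v : H) :
    FnLEC (vectorFunctional π (u + v))
      (((2 : ℝ) : ℂ) • (vectorFunctional π u + vectorFunctional π v)) :=
  fnLEC_iff.2 fun a => by
    simp only [LinearMap.smul_apply, LinearMap.add_apply, vectorFunctional_star_mul_self, map_add,
      smul_eq_mul]
    norm_cast
    nlinarith [parallelogram_law_with_norm ℂ (π a u) (π a v), sq_nonneg ‖π a u - π a v‖]

/-- The vector `ξ` is cyclic for the representation `π`: its orbit `π(A) ξ` is dense. -/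
def IsCyclicVector (ξ : H) : Prop := DenseRange fun a => π a ξ

variable {π} {ξ : H}

theorem IsCyclicVector.tendsto_approximateUnit [PartialOrder A] [StarOrderedRing A]
    (hξ : IsCyclicVector π ξ) (η : H) :
    Tendsto (fun e => π e η) (CStarAlgebra.approximateUnit A) (𝓝 η) := by
  have hunit := CStarAlgebra.increasingApproximateUnit A
  refine Metric.tendsto_nhds.2 fun ε hε => ?_
  obtain ⟨b, hb⟩ := hξ.exists_dist_lt η (ε := ε / 3) (by positivity)
  have horbit : Tendsto (fun e => π e (π b ξ)) (CStarAlgebra.approximateUnit A) (𝓝 (π b ξ)) := by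
    simp only [← rep_mul_apply]
    exact ((map_continuous π).clm_apply continuous_const).continuousAt.tendsto.comp
      (hunit.tendsto_mul_right b)
  filter_upwards [hunit.eventually_norm,
    Metric.tendsto_nhds.1 horbit (ε / 3) (by positivity)] with e he heb
  have hηb : dist (π e η) (π e (π b ξ)) ≤ dist η (π b ξ) := by
    simpa only [dist_eq_norm, ← map_sub] using
      (norm_rep_apply_le π e _).trans (mul_le_of_le_one_left (norm_nonneg _) he)
  linarith [dist_triangle4 (π e η) (π e (π b ξ)) (π b ξ) η, dist_comm η (π b ξ)]

theorem IsCyclicVector.mem_closure_range (hξ : IsCyclicVector π ξ) (η : H) :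
    η ∈ closure (Set.range fun e => π e η) := by
  let _ := CStarAlgebra.spectralOrder A
  let _ := CStarAlgebra.spectralOrderedRing A
  have := (CStarAlgebra.increasingApproximateUnit A).neBot
  exact mem_closure_of_tendsto (hξ.tendsto_approximateUnit η) (.of_forall Set.mem_range_self)

theorem IsCyclicVector.eq_zero_of_vectorFunctional_eq_zero (hξ : IsCyclicVector π ξ) {η : H}
    (hη : vectorFunctional π η = 0) : η = 0 := by
  have hzero : ∀ e, π e η = 0 := fun e => by
    have := vectorFunctional_star_mul_self π η e
    rw [hη, LinearMap.zero_apply] at this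
    simpa using this.symm
  simpa [hzero] using hξ.mem_closure_range η

end Representations

section GNS

variable {A B : Type} [NonUnitalCStarAlgebra A] [NonUnitalCStarAlgebra B] {f : A →ₗ[ℂ] ℂ}

-- `f b = lim f (e b) = lim ⟪ι e, ι b⟫` along an approximate unit.
theorem IsPosFnC.exists_norm_apply_le_mul_norm {H : Type*} [NormedAddCommGroup H]
    [InnerProductSpace ℂ H] (hf : IsPosFnC f) {ι : A →ₗ[ℂ] H}
    (hι : ∀ a b, inner ℂ (ι a) (ι b) = f (star a * b)) :
    ∃ C : ℝ, ∀ b, ‖f b‖ ≤ C * ‖ι b‖ := by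
  let _ := CStarAlgebra.spectralOrder A
  let _ := CStarAlgebra.spectralOrderedRing A
  have hunit := CStarAlgebra.increasingApproximateUnit A
  have := hunit.neBot
  obtain ⟨C, hC0, hC⟩ := hf.exists_norm_apply_le
  have hι_norm : ∀ e, ‖e‖ ≤ 1 → ‖ι e‖ ≤ √C := fun e he => by
    refine Real.le_sqrt_of_sq_le ?_
    calc ‖ι e‖ ^ 2 = ‖f (star e * e)‖ := by rw [← hι, inner_self_eq_norm_sq_to_K]; simp
      _ ≤ C * (‖e‖ * ‖e‖) := by simpa only [CStarRing.norm_star_mul_self] using hC (star e * e)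
      _ ≤ C := mul_le_of_le_one_right hC0 (mul_le_one₀ he (norm_nonneg e) he)
  refine ⟨√C, fun b => ?_⟩
  have hlim : Tendsto (fun e => ‖f (e * b)‖) (CStarAlgebra.approximateUnit A) (𝓝 ‖f b‖) :=
    (((f.mkContinuous C hC).continuous.tendsto b).comp (hunit.tendsto_mul_right b)).norm
  refine le_of_tendsto hlim ?_
  filter_upwards [hunit.eventually_norm, hunit.eventually_star_eq] with e he hstar
  calc ‖f (e * b)‖ = ‖inner ℂ (ι e) (ι b)‖ := by rw [hι, hstar]
    _ ≤ ‖ι e‖ * ‖ι b‖ := norm_inner_le_norm _ _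
    _ ≤ √C * ‖ι b‖ := by gcongr; exact hι_norm e he

theorem IsPosFnC.exists_gns_map (hf : IsPosFnC f) :
    ∃ (H : Type) (_ : NormedAddCommGroup H) (_ : InnerProductSpace ℂ H) (_ : CompleteSpace H)
      (π : A →⋆ₙₐ[ℂ] (H →L[ℂ] H)) (ι : A →ₗ[ℂ] H), DenseRange ι ∧
      (∀ a b, inner ℂ (ι a) (ι b) = f (star a * b)) ∧ ∀ a b, π a (ι b) = ι (a * b) := by
  let _ := CStarAlgebra.spectralOrder A
  let _ := CStarAlgebra.spectralOrderedRing A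
  let P : A →ₚ[ℂ] ℂ := PositiveLinearMap.mk₀ f fun _ => hf.apply_nonneg
  refine ⟨P.GNS, inferInstance, inferInstance, inferInstance, P.gnsNonUnitalStarAlgHom,
    (UniformSpace.Completion.toComplL (𝕜 := ℂ) (E := P.PreGNS)).toLinearMap ∘ₗ
      P.toPreGNS.toLinearMap, ?_, fun a b => ?_, fun a b => ?_⟩
  · exact UniformSpace.Completion.denseRange_coe (α := P.PreGNS)
  · exact (UniformSpace.Completion.inner_coe _ _).trans (P.preGNS_inner_def _ _)
  · exact P.gnsNonUnitalStarAlgHom_apply_coe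

theorem IsPosFnC.exists_eq_vectorFunctional (hf : IsPosFnC f) :
    ∃ (H : Type) (_ : NormedAddCommGroup H) (_ : InnerProductSpace ℂ H) (_ : CompleteSpace H)
      (π : A →⋆ₙₐ[ℂ] (H →L[ℂ] H)) (ξ : H), IsCyclicVector π ξ ∧ f = vectorFunctional π ξ := by
  obtain ⟨H, _, _, _, π, ι, hdense, hinner, hact⟩ := hf.exists_gns_map
  obtain ⟨C, hC⟩ := hf.exists_norm_apply_le_mul_norm hinner
  let L : H →L[ℂ] ℂ := LinearMap.extendOfNorm f ι
  have hL : ∀ b, L (ι b) = f b := LinearMap.extendOfNorm_eq hdense ⟨C, hC⟩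
  let ξ : H := (InnerProductSpace.toDual ℂ H).symm L
  have hξ : ∀ v, inner ℂ ξ v = L v := fun v => InnerProductSpace.toDual_symm_apply
  have hπξ : ∀ b, π b ξ = ι b := fun b =>
    hdense.eq_of_inner_left ℂ fun c => by
      rw [inner_rep_apply_left, hact, hξ, hL, hinner]
  refine ⟨H, _, _, _, π, ξ, ?_, ?_⟩
  · simpa only [IsCyclicVector, hπξ] using hdense
  · ext b
    rw [vectorFunctional_apply, hπξ, hξ, hL]

end GNS

section Extension

theorem exists_norm_eq_extension_of_linearIsometry {𝕜 E F : Type*} [RCLike 𝕜]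
    [NormedAddCommGroup E] [NormedSpace 𝕜 E] [NormedAddCommGroup F] [NormedSpace 𝕜 F]
    (V : E →ₗᵢ[𝕜] F) (f : StrongDual 𝕜 E) :
    ∃ g : StrongDual 𝕜 F, (∀ x, g (V x) = f x) ∧ ‖g‖ = ‖f‖ := by
  obtain ⟨g, hg, hnorm⟩ := exists_extension_norm_eq V.toLinearMap.range
    (f.comp V.equivRange.symm.toContinuousLinearEquiv.toContinuousLinearMap)
  refine ⟨g, fun x => ?_, hnorm.trans (f.opNorm_comp_linearIsometryEquiv V.equivRange.symm)⟩
  simpa using hg (V.equivRange x)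

variable {A B : Type} [NonUnitalCStarAlgebra A] [NonUnitalCStarAlgebra B]

theorem norm_sub_le_one_of_nonneg [PartialOrder A] [StarOrderedRing A] {a b : A}
    (ha : 0 ≤ a) (ha1 : ‖a‖ ≤ 1) (hb : 0 ≤ b) (hb1 : ‖b‖ ≤ 1) : ‖a - b‖ ≤ 1 := by
  obtain ⟨ha0, ha1⟩ := CStarAlgebra.inr_mem_Icc_iff_norm_le.2 ⟨ha, ha1⟩
  obtain ⟨hb0, hb1⟩ := CStarAlgebra.inr_mem_Icc_iff_norm_le.2 ⟨hb, hb1⟩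
  set x : Unitization ℂ A := (a : Unitization ℂ A) - b
  have hx : IsSelfAdjoint x := (IsSelfAdjoint.of_nonneg ha0).sub (.of_nonneg hb0)
  have hx_le : x ≤ algebraMap ℝ _ 1 := by
    rw [map_one]
    exact (sub_le_self _ hb0).trans ha1
  have hx_ge : algebraMap ℝ _ (-1) ≤ x := by
    rw [map_neg, map_one]
    exact (neg_le_neg hb1).trans (by simpa [x] using ha0)
  rw [le_algebraMap_iff_spectrum_le] at hx_le
  rw [algebraMap_le_iff_le_spectrum] at hx_ge
  rw [← Unitization.norm_inr (𝕜 := ℂ), Unitization.inr_sub]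
  rcases CStarAlgebra.norm_or_neg_norm_mem_spectrum hx with h | h
  · exact hx_le _ h
  · linarith [hx_ge _ h]

-- For positive contractions `a` and `e`, `re (F e) - re (F a) ≤ ‖F‖ * ‖e - a‖ ≤ M`.
theorem re_apply_nonneg_of_tendsto [PartialOrder A] [StarOrderedRing A] {F : StrongDual ℂ A}
    {M : ℝ} (hF : ‖F‖ ≤ M) {ι : Type*} {l : Filter ι} [l.NeBot] {e : ι → A}
    (he : ∀ᶠ i in l, 0 ≤ e i ∧ ‖e i‖ ≤ 1) (hlim : Tendsto (fun i => (F (e i)).re) l (𝓝 M))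
    {a : A} (ha : 0 ≤ a) : 0 ≤ (F a).re := by
  have hcontr : ∀ b : A, 0 ≤ b → ‖b‖ ≤ 1 → 0 ≤ (F b).re := fun b hb hb1 => by
    have hM : M - (F b).re ≤ M := by
      refine le_of_tendsto (hlim.sub_const _) (he.mono fun i hi => ?_)
      calc (F (e i)).re - (F b).re = (F (e i - b)).re := by simp
        _ ≤ ‖F (e i - b)‖ := Complex.re_le_norm _
        _ ≤ ‖F‖ * ‖e i - b‖ := F.le_opNorm _
        _ ≤ ‖F‖ := mul_le_of_le_one_right (norm_nonneg _)
            (norm_sub_le_one_of_nonneg hi.1 hi.2 hb hb1)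
        _ ≤ M := hF
    linarith
  rcases eq_or_ne a 0 with rfl | ha0
  · simp
  have hna : 0 < ‖a‖ := norm_pos_iff.2 ha0
  have hscaled := hcontr ((‖a‖⁻¹ : ℝ) • a) (smul_nonneg (inv_nonneg.2 hna.le) ha)
    (by rw [norm_smul, norm_inv, norm_norm, inv_mul_cancel₀ hna.ne'])
  rw [← Complex.coe_smul, map_smul, smul_eq_mul, Complex.re_ofReal_mul] at hscaled
  exact (mul_nonneg_iff_of_pos_left (inv_pos.2 hna)).1 hscaled

-- `G` is the hermitian part of `F`.
theorem exists_isPosFnC_of_re_nonneg {F : A →ₗ[ℂ] ℂ} (hF : ∀ a, 0 ≤ (F (star a * a)).re) :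
    ∃ G : A →ₗ[ℂ] ℂ, IsPosFnC G ∧ ∀ a, G (star a * a) = (F (star a * a)).re := by
  let G : A →ₗ[ℂ] ℂ :=
    { toFun a := (F a + star (F (star a))) / 2
      map_add' a b := by simp; ring
      map_smul' c a := by simp; ring }
  have hG : ∀ a, G (star a * a) = (F (star a * a)).re := fun a => by
    change (F (star a * a) + star (F (star (star a * a)))) / 2 = _
    rw [star_mul, star_star, Complex.re_eq_add_conj, starRingEnd_apply]
  exact ⟨G, fun a => (Complex.zero_le_real.2 (hF a)).trans_eq (hG a).symm, hG⟩

theorem IsPosFnC.exists_extension {f : B →ₗ[ℂ] ℂ} (hf : IsPosFnC f) (j : B →⋆ₙₐ[ℂ] A)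
    (hj : Function.Injective j) :
    ∃ F : A →ₗ[ℂ] ℂ, IsPosFnC F ∧ F ∘ₗ (j : B →ₗ[ℂ] A) = f := by
  let _ := CStarAlgebra.spectralOrder A
  let _ := CStarAlgebra.spectralOrderedRing A
  let _ := CStarAlgebra.spectralOrder B
  let _ := CStarAlgebra.spectralOrderedRing B
  have hunit := CStarAlgebra.increasingApproximateUnit B
  have := hunit.neBot
  obtain ⟨H, _, _, _, π, ξ, hξ, rfl⟩ := hf.exists_eq_vectorFunctional
  obtain ⟨F, hFj, hF⟩ := exists_norm_eq_extension_of_linearIsometry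
    (LinearIsometry.mk (j : B →ₗ[ℂ] A) (NonUnitalStarAlgHom.norm_map j hj))
    ((vectorFunctional π ξ).mkContinuous (‖ξ‖ ^ 2) fun b => by
      rw [mul_comm]; exact norm_vectorFunctional_apply_le π ξ b)
  have hFj : ∀ b, F (j b) = vectorFunctional π ξ b := hFj
  have hF : ‖F‖ ≤ ‖ξ‖ ^ 2 := hF.le.trans (LinearMap.mkContinuous_norm_le _ (sq_nonneg _) _)
  have hlim : Tendsto (fun e => (F (j e)).re) (CStarAlgebra.approximateUnit B) (𝓝 (‖ξ‖ ^ 2)) := by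
    rw [← inner_self_eq_norm_sq (𝕜 := ℂ)]
    simp only [hFj]
    exact (Complex.continuous_re.tendsto _).comp
      (tendsto_const_nhds.inner (hξ.tendsto_approximateUnit ξ))
  have hpos : ∀ a : A, 0 ≤ a → 0 ≤ (F a).re := fun a ha => by
    refine re_apply_nonneg_of_tendsto hF ?_ hlim ha
    filter_upwards [hunit.eventually_nonneg, hunit.eventually_norm] with e he he1
    exact ⟨map_nonneg j he, by rwa [NonUnitalStarAlgHom.norm_map j hj]⟩
  obtain ⟨G, hG, hGF⟩ := exists_isPosFnC_of_re_nonneg (F := F.toLinearMap)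
    fun a => hpos _ (star_mul_self_nonneg a)
  refine ⟨G, hG, eq_of_forall_star_mul_self_eq fun b => ?_⟩
  calc G (j (star b * b)) = (F (j (star b * b))).re := by simpa [map_star] using hGF (j b)
    _ = vectorFunctional π ξ (star b * b) := by
        rw [hFj, vectorFunctional_star_mul_self, Complex.ofReal_re]

end Extension

section RadonNikodym

variable {A : Type} [NonUnitalCStarAlgebra A]
  {H : Type*} [NormedAddCommGroup H] [InnerProductSpace ℂ H] [CompleteSpace H]
  {H' : Type*} [NormedAddCommGroup H'] [InnerProductSpace ℂ H'] [CompleteSpace H']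
  {π : A →⋆ₙₐ[ℂ] (H →L[ℂ] H)} {π' : A →⋆ₙₐ[ℂ] (H' →L[ℂ] H')} {ξ : H} {ξ' : H'}
  {f g p r s : A →ₗ[ℂ] ℂ}

theorem IsCyclicVector.exists_intertwiner (hξ : IsCyclicVector π ξ)
    (hle : FnLEC (vectorFunctional π' ξ') (vectorFunctional π ξ)) :
    ∃ J : H →L[ℂ] H', ‖J‖ ≤ 1 ∧ (∀ a, J (π a ξ) = π' a ξ') ∧ ∀ a v, J (π a v) = π' a (J v) := by
  let ι : A →ₗ[ℂ] H := (ContinuousLinearMap.apply ℂ H ξ).toLinearMap ∘ₗ (π : A →ₗ[ℂ] H →L[ℂ] H)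
  let ι' : A →ₗ[ℂ] H' :=
    (ContinuousLinearMap.apply ℂ H' ξ').toLinearMap ∘ₗ (π' : A →ₗ[ℂ] H' →L[ℂ] H')
  have hι : DenseRange ι := hξ
  have hnorm : ∀ a, ‖ι' a‖ ≤ 1 * ‖ι a‖ := fun a => by
    have := fnLEC_iff.1 hle a
    rw [vectorFunctional_star_mul_self, vectorFunctional_star_mul_self,
      Complex.real_le_real] at this
    rw [one_mul]
    exact (sq_le_sq₀ (norm_nonneg _) (norm_nonneg _)).1 this
  let J : H →L[ℂ] H' := LinearMap.extendOfNorm ι' ι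
  have hJ : ∀ a, J (π a ξ) = π' a ξ' := LinearMap.extendOfNorm_eq hι ⟨1, hnorm⟩
  refine ⟨J, LinearMap.opNorm_extendOfNorm_le hι zero_le_one hnorm, hJ, fun a v => ?_⟩
  refine hξ.induction_on v (isClosed_eq (by fun_prop) (by fun_prop)) fun b => ?_
  rw [← rep_mul_apply, hJ, hJ, rep_mul_apply]

/-- `T` is the Radon–Nikodym operator of `p` with respect to the vector functional of `ξ`: it lies
in the commutant of `π`, satisfies `0 ≤ T ≤ 1`, and `p (a⋆ * b) = ⟪π a ξ, T (π b ξ)⟫`. The bounds on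
`T` are encoded in the equivalent form `T ^ 2 ≤ T`. -/
structure IsRadonNikodym (π : A →⋆ₙₐ[ℂ] (H →L[ℂ] H)) (ξ : H) (p : A →ₗ[ℂ] ℂ) (T : H →L[ℂ] H) :
    Prop where
  apply_rep : ∀ a v, T (π a v) = π a (T v)
  inner_apply_left : ∀ u v, inner ℂ (T u) v = inner ℂ u (T v)
  norm_sq_le : ∀ v, ‖T v‖ ^ 2 ≤ (inner ℂ v (T v)).re
  inner_orbit : ∀ a b, inner ℂ (π a ξ) (T (π b ξ)) = p (star a * b)

theorem IsCyclicVector.exists_isRadonNikodym (hξ : IsCyclicVector π ξ) (hp : IsPosFnC p)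
    (hle : FnLEC p (vectorFunctional π ξ)) : ∃ T, IsRadonNikodym π ξ p T := by
  obtain ⟨H', _, _, _, π', ξ', -, rfl⟩ := hp.exists_eq_vectorFunctional
  obtain ⟨J, hJnorm, hJ, hJπ⟩ := hξ.exists_intertwiner hle
  have hJJ : ∀ u v, inner ℂ u (J.adjoint (J v)) = inner ℂ (J u) (J v) := fun u v =>
    J.adjoint_inner_right u (J v)
  refine ⟨J.adjoint ∘L J, fun a v => ?_, fun u v => ?_, fun v => ?_, fun a b => ?_⟩
  · refine ext_inner_left ℂ fun u => ?_
    change inner ℂ u (J.adjoint (J (π a v))) = inner ℂ u (π a (J.adjoint (J v)))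
    rw [hJJ, hJπ, ← star_star a, ← inner_rep_apply_left, ← inner_rep_apply_left, hJJ, hJπ]
  · exact (J.adjoint_inner_left v (J u)).trans (hJJ u v).symm
  · calc ‖J.adjoint (J v)‖ ^ 2 ≤ (1 * ‖J v‖) ^ 2 := by
          gcongr
          exact J.adjoint.le_of_opNorm_le ((LinearIsometryEquiv.norm_map _ J).trans_le hJnorm) _
      _ = (inner ℂ v ((J.adjoint ∘L J) v)).re := by
          rw [one_mul, ContinuousLinearMap.comp_apply, hJJ, ← inner_self_eq_norm_sq (𝕜 := ℂ)]
          rfl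
  · rw [ContinuousLinearMap.comp_apply, hJJ, hJ, hJ, inner_rep_apply_left, ← rep_mul_apply,
      vectorFunctional_apply]

namespace IsRadonNikodym

variable {P T : H →L[ℂ] H}

theorem norm_apply_le (hT : IsRadonNikodym π ξ p T) (v : H) : ‖T v‖ ≤ ‖v‖ := by
  have h := (hT.norm_sq_le v).trans (re_inner_le_norm (𝕜 := ℂ) v (T v))
  by_contra! hlt
  nlinarith [norm_nonneg v]

theorem apply_eq_zero_of_re_inner_le_zero (hT : IsRadonNikodym π ξ p T) {v : H}
    (hv : (inner ℂ v (T v)).re ≤ 0) : T v = 0 :=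
  norm_eq_zero.1 (sq_eq_zero_iff.1 (((hT.norm_sq_le v).trans hv).antisymm (sq_nonneg _)))

theorem re_inner_le (hP : IsRadonNikodym π ξ p P) (hT : IsRadonNikodym π ξ g T)
    (hξ : IsCyclicVector π ξ) {c : ℝ} (hpg : FnLEC p ((c : ℂ) • g)) (v : H) :
    (inner ℂ v (P v)).re ≤ c * (inner ℂ v (T v)).re := by
  refine hξ.induction_on v (isClosed_le (by fun_prop) (by fun_prop)) fun a => ?_
  rw [hP.inner_orbit, hT.inner_orbit]
  simpa using (Complex.le_def.1 (fnLEC_iff.1 hpg a)).1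

theorem apply_eq_zero_of_isDominatedBy (hP : IsRadonNikodym π ξ p P)
    (hT : IsRadonNikodym π ξ g T) (hξ : IsCyclicVector π ξ) (hpg : IsDominatedBy p g) {w : H}
    (hw : T w = 0) : P w = 0 := by
  obtain ⟨c, -, hpc⟩ := hpg
  have h := hP.re_inner_le hT hξ hpc w
  rw [hw, inner_zero_right, Complex.zero_re, mul_zero] at h
  exact hP.apply_eq_zero_of_re_inner_le_zero h

theorem apply_eq_zero_of_absContC (hP : IsRadonNikodym π ξ p P) (hT : IsRadonNikodym π ξ g T)
    (hξ : IsCyclicVector π ξ) (hle : FnLEC p (vectorFunctional π ξ)) (hpg : AbsContC p g)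
    {w : H} (hw : T w = 0) : P w = 0 := by
  obtain ⟨y, α, hy, hα, hmono, hyg, hlim⟩ := hpg
  choose Y hY using fun n => hξ.exists_isRadonNikodym (hy n)
    ((fnLEC_of_monotone_tendsto hmono hlim n).trans hle)
  have hYw : ∀ n, Y n w = 0 := fun n =>
    (hY n).apply_eq_zero_of_isDominatedBy hT hξ ⟨α n, (hα n).le, hyg n⟩ hw
  have hbound : ∀ v, ‖P v‖ ^ 2 ≤ ‖v‖ * ‖v - w‖ := fun v => by
    refine hξ.induction_on v (isClosed_le (by fun_prop) (by fun_prop)) fun a => ?_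
    refine (hP.norm_sq_le _).trans ?_
    rw [hP.inner_orbit]
    refine le_of_tendsto' ((Complex.continuous_re.tendsto _).comp (hlim _)) fun n => ?_
    calc (y n (star a * a)).re = (inner ℂ (π a ξ) (Y n (π a ξ - w))).re := by
          rw [map_sub, hYw, sub_zero, (hY n).inner_orbit]
      _ ≤ ‖π a ξ‖ * ‖Y n (π a ξ - w)‖ := re_inner_le_norm (𝕜 := ℂ) _ _
      _ ≤ ‖π a ξ‖ * ‖π a ξ - w‖ := by gcongr; exact (hY n).norm_apply_le _
  simpa using hbound w

end IsRadonNikodym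

theorem IsCyclicVector.clm_ext (hξ : IsCyclicVector π ξ) {S T : H →L[ℂ] H}
    (hST : ∀ a b, inner ℂ (π a ξ) (S (π b ξ)) = inner ℂ (π a ξ) (T (π b ξ))) : S = T :=
  ContinuousLinearMap.ext fun v =>
    hξ.induction_on v (isClosed_eq (by fun_prop) (by fun_prop)) fun b =>
      hξ.eq_of_inner_right ℂ fun a => hST a b

/-- The space of vectors whose vector functional is `g`-dominated. -/
def dominatedVectors (π : A →⋆ₙₐ[ℂ] (H →L[ℂ] H)) (g : A →ₗ[ℂ] ℂ) : Submodule ℂ H where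
  carrier := {v | IsDominatedBy (vectorFunctional π v) g}
  zero_mem' := by
    have : vectorFunctional π 0 = 0 := by simpa using vectorFunctional_smul π 0 0
    simpa [this] using IsDominatedBy.zero g
  add_mem' {u v} hu hv :=
    .of_fnLEC (fnLEC_vectorFunctional_add π u v) ((hu.add hv).smul zero_le_two)
  smul_mem' c v hv := by
    simpa only [Set.mem_ofPred_eq, vectorFunctional_smul] using hv.smul (sq_nonneg ‖c‖)

theorem mem_dominatedVectors {v : H} :
    v ∈ dominatedVectors π g ↔ IsDominatedBy (vectorFunctional π v) g := Iff.rfl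

namespace IsRadonNikodym

variable {R S P T : H →L[ℂ] H}

theorem fnLEC_vectorFunctional_apply (hP : IsRadonNikodym π ξ p P) (v : H) :
    FnLEC (vectorFunctional π (P v)) (vectorFunctional π v) :=
  fnLEC_iff.2 fun a => by
    simp only [vectorFunctional_star_mul_self, ← hP.apply_rep, Complex.real_le_real]
    gcongr
    exact hP.norm_apply_le _

theorem apply_mem_closure_dominatedVectors (hP : IsRadonNikodym π ξ p P) {v : H}
    (hv : v ∈ (dominatedVectors π g).topologicalClosure) :
    P v ∈ (dominatedVectors π g).topologicalClosure :=
  map_mem_closure P.continuous hv fun u hu =>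
    IsDominatedBy.of_fnLEC (hP.fnLEC_vectorFunctional_apply u) hu

theorem apply_cyclic_mem_dominatedVectors (hT : IsRadonNikodym π ξ g T) (hg : IsPosFnC g) :
    T ξ ∈ dominatedVectors π g :=
  FnLEC.isDominatedBy <| fnLEC_iff.2 fun a => by
    rw [vectorFunctional_star_mul_self, Complex.eq_re_of_ofReal_le (hg a), ← hT.apply_rep,
      ← hT.inner_orbit, Complex.real_le_real]
    exact hT.norm_sq_le _

theorem apply_mem_orthogonal_ker (hT : IsRadonNikodym π ξ g T) (v : H) :
    T v ∈ (LinearMap.ker (T : H →ₗ[ℂ] H))ᗮ :=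
  (Submodule.mem_orthogonal _ _).2 fun u hu => by
    rw [← hT.inner_apply_left, show T u = 0 from hu, inner_zero_left]

-- `ξ - w` is the projection of `ξ` onto `M`, the part of `(ker T)ᗮ` in the closure of the
-- dominated vectors. Since `M` contains `T ξ` and is `T`-invariant, `T w ∈ M` and so
-- `⟪w, T w⟫ = 0`.
theorem exists_mem_ker (hT : IsRadonNikodym π ξ g T) (hg : IsPosFnC g) :
    ∃ w, T w = 0 ∧ ξ - w ∈ (dominatedVectors π g).topologicalClosure ∧
      ξ - w ∈ (LinearMap.ker (T : H →ₗ[ℂ] H))ᗮ := by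
  let M := (dominatedVectors π g).topologicalClosure ⊓ (LinearMap.ker (T : H →ₗ[ℂ] H))ᗮ
  have hM : IsClosed (M : Set H) :=
    (Submodule.isClosed_topologicalClosure _).inter (Submodule.isClosed_orthogonal _)
  have : CompleteSpace M := hM.completeSpace_coe
  have hTξ : T ξ ∈ M :=
    ⟨Submodule.le_topologicalClosure _ (hT.apply_cyclic_mem_dominatedVectors hg),
      hT.apply_mem_orthogonal_ker ξ⟩
  obtain ⟨m, hm, w, hw, hξ⟩ := M.exists_add_mem_mem_orthogonal ξ
  have hTw : T w ∈ M := by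
    rw [← add_sub_cancel_left m w, ← hξ, map_sub]
    exact M.sub_mem hTξ
      ⟨hT.apply_mem_closure_dominatedVectors hm.1, hT.apply_mem_orthogonal_ker m⟩
  have hinner : inner ℂ w (T w) = 0 := M.inner_left_of_mem_orthogonal hTw hw
  refine ⟨w, hT.apply_eq_zero_of_re_inner_le_zero (by rw [hinner, Complex.zero_re]), ?_⟩
  rwa [hξ, add_sub_cancel_right]

theorem add_add_eq_one (hR : IsRadonNikodym π ξ r R) (hS : IsRadonNikodym π ξ s S)
    (hT : IsRadonNikodym π ξ g T) (hξ : IsCyclicVector π ξ)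
    (hsum : vectorFunctional π ξ = r + s + g) : R + S + T = 1 :=
  hξ.clm_ext fun a b => by
    simp only [add_apply, inner_add_right, hR.inner_orbit, hS.inner_orbit, hT.inner_orbit,
      one_apply_eq_self]
    rw [inner_rep_apply_left, ← rep_mul_apply, ← vectorFunctional_apply, hsum]
    rfl

theorem norm_apply_sq_le_of_inner_eq_zero (hS : IsRadonNikodym π ξ s S) {u v : H} (hv : S v = v)
    (huv : inner ℂ u v = 0) : ‖S u‖ ^ 2 ≤ (inner ℂ (u + v) (S (u + v))).re := by
  have hvu : inner ℂ v (S u) = 0 := by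
    rw [← hS.inner_apply_left, hv, inner_eq_zero_symm.1 huv]
  have hvv : (inner ℂ v v).re = ‖v‖ ^ 2 := inner_self_eq_norm_sq (𝕜 := ℂ) v
  simp only [map_add, hv, inner_add_left, inner_add_right, huv, hvu, Complex.add_re, hvv,
    Complex.zero_re]
  linarith [hS.norm_sq_le u, sq_nonneg ‖v‖]

theorem fnLEC_vectorFunctional_apply_sub (hS : IsRadonNikodym π ξ s S) (hs : IsPosFnC s)
    (hT : IsRadonNikodym π ξ g T) {w : H} (hTw : T w = 0) (hSw : S w = w)
    (hw : ξ - w ∈ (LinearMap.ker (T : H →ₗ[ℂ] H))ᗮ) :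
    FnLEC (vectorFunctional π (S ξ - w)) s :=
  fnLEC_iff.2 fun a => by
    have hSa : S (π a w) = π a w := by rw [hS.apply_rep, hSw]
    have horth : inner ℂ (π a (ξ - w)) (π a w) = 0 := by
      rw [inner_rep_apply_left, ← rep_mul_apply]
      refine Submodule.inner_left_of_mem_orthogonal (K := LinearMap.ker (T : H →ₗ[ℂ] H)) ?_ hw
      change T (π _ w) = 0
      rw [hT.apply_rep, hTw, map_zero]
    have hle := hS.norm_apply_sq_le_of_inner_eq_zero hSa horth
    rw [← map_add, sub_add_cancel, hS.inner_orbit, hS.apply_rep, map_sub S, hSw] at hle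
    rwa [vectorFunctional_star_mul_self, Complex.eq_re_of_ofReal_le (hs a), Complex.real_le_real]

end IsRadonNikodym

-- If `R`, `S`, `T` are the Radon–Nikodym operators of `r`, `s`, `g`, then `R + S + T = 1` and
-- `R w = T w = 0`, so `S w = w`; the vector `η` is `S ξ - w`.
theorem IsLebDecompC.exists_vector (hrs : IsLebDecompC f g r s) (hg : IsPosFnC g)
    (hξ : IsCyclicVector π ξ) (hfg : vectorFunctional π ξ = f + g) {T : H →L[ℂ] H}
    (hT : IsRadonNikodym π ξ g T) {w : H} (hTw : T w = 0)
    (hw : ξ - w ∈ (dominatedVectors π g).topologicalClosure)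
    (hw' : ξ - w ∈ (LinearMap.ker (T : H →ₗ[ℂ] H))ᗮ) :
    ∃ η ∈ (dominatedVectors π g).topologicalClosure, FnLEC (vectorFunctional π η) s ∧
      ∀ a, s (star a * a) = inner ℂ (π a ξ) (π a (η + w)) := by
  obtain ⟨hr, hs, rfl, hrg, -⟩ := hrs
  have hr_le : FnLEC r (vectorFunctional π ξ) := by
    rw [hfg, add_assoc]
    exact (hs.add hg).fnLEC_add_right
  have hs_le : FnLEC s (vectorFunctional π ξ) := by
    rw [hfg, add_right_comm, add_comm (r + g)]
    exact (hr.add hg).fnLEC_add_right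
  obtain ⟨R, hR⟩ := hξ.exists_isRadonNikodym hr hr_le
  obtain ⟨S, hS⟩ := hξ.exists_isRadonNikodym hs hs_le
  have hSw : S w = w := by
    simpa [hR.apply_eq_zero_of_absContC hT hξ hr_le hrg hTw, hTw] using
      congr($(hR.add_add_eq_one hS hT hξ hfg) w)
  refine ⟨S ξ - w, ?_, hS.fnLEC_vectorFunctional_apply_sub hs hT hTw hSw hw', fun a => ?_⟩
  · simpa [hSw] using hS.apply_mem_closure_dominatedVectors hw
  · rw [sub_add_cancel, ← hS.apply_rep, hS.inner_orbit]

end RadonNikodym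

section Closure

theorem norm_sq_le_norm_add_sq_add {𝕜 E : Type*} [RCLike 𝕜] [NormedAddCommGroup E]
    [InnerProductSpace 𝕜 E] (u v : E) {t : ℝ} (ht : 0 < t) :
    ‖u‖ ^ 2 ≤ ‖u + v‖ ^ 2 + (t * ‖u‖ ^ 2 + t⁻¹ * ‖v‖ ^ 2) := by
  have hexpand := norm_add_sq (𝕜 := 𝕜) u v
  have hcauchy : -RCLike.re (inner 𝕜 u v) ≤ ‖u‖ * ‖v‖ := by
    simpa using re_inner_le_norm (𝕜 := 𝕜) u (-v)
  linarith [two_mul_le_add_mul_sq (a := ‖u‖) (b := ‖v‖) ht, sq_nonneg ‖v‖]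

variable {A : Type} [NonUnitalCStarAlgebra A]
  {H : Type*} [NormedAddCommGroup H] [InnerProductSpace ℂ H] [CompleteSpace H]
  {π : A →⋆ₙₐ[ℂ] (H →L[ℂ] H)} {g : A →ₗ[ℂ] ℂ}

theorem fnLEC_vectorFunctional_add_add (u v : H) {t : ℝ} (ht : 0 < t) :
    FnLEC (vectorFunctional π u) (vectorFunctional π (u + v) +
      ((t : ℂ) • vectorFunctional π u + ((t⁻¹ : ℝ) : ℂ) • vectorFunctional π v)) :=
  fnLEC_iff.2 fun a => by
    simp only [LinearMap.smul_apply, LinearMap.add_apply, vectorFunctional_star_mul_self, map_add,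
      smul_eq_mul]
    exact_mod_cast norm_sq_le_norm_add_sq_add (𝕜 := ℂ) (π a u) (π a v) ht

theorem exists_partial_sums_tendsto {E : Type*} [NormedAddCommGroup E] {D : AddSubgroup E} {x : E}
    (hx : x ∈ closure (D : Set E)) : ∃ v : ℕ → E, (∀ n, v n ∈ D) ∧
      Tendsto (fun n => ∑ i ∈ Finset.range n, v i) atTop (𝓝 x) ∧
      ∃ C, ∀ n, ‖v n‖ ≤ C * (1 / 2) ^ n := by
  obtain ⟨v, hlim, hD, -, hnorm⟩ :=
    controlled_sum_of_mem_closure hx (b := fun n => (1 / 2) ^ n) fun n => by positivity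
  refine ⟨v, hD, (tendsto_add_atTop_iff_nat 1).1 hlim, max 1 ‖v 0‖, fun n => ?_⟩
  rcases n.eq_zero_or_pos with rfl | hn
  · simp
  · exact (hnorm n hn).le.trans (le_mul_of_one_le_left (by positivity) (le_max_left _ _))

-- Along partial sums `u n` converging geometrically to `η`, the vector functional of `u n` exceeds
-- that of `u (n + 1) = u n + v n` by at most `2⁻ⁿ • vectorFunctional π (u n)` plus
-- `2ⁿ • vectorFunctional π (v n)`. These errors are summable, and `P` is their sum.
theorem exists_absContC_add_vectorFunctional (hg : IsPosFnC g) {η : H}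
    (hη : η ∈ (dominatedVectors π g).topologicalClosure) :
    ∃ P, IsPosFnC P ∧ AbsContC P g ∧ AbsContC (P + vectorFunctional π η) g := by
  obtain ⟨v, hv, hlim, C, hC⟩ := exists_partial_sums_tendsto
    (D := (dominatedVectors π g).toAddSubgroup) hη
  set u : ℕ → H := fun n => ∑ i ∈ Finset.range n, v i with hu_def
  have hu : ∀ n, u n ∈ dominatedVectors π g := fun n => Submodule.sum_mem _ fun i _ => hv i
  obtain ⟨D, hD⟩ := hlim.norm.bddAbove_range
  have hD : ∀ n, ‖u n‖ ≤ D := fun n => hD ⟨n, rfl⟩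
  let p : ℕ → A →ₗ[ℂ] ℂ := fun n => (((1 / 2) ^ n : ℝ) : ℂ) • vectorFunctional π (u n) +
    ((((1 / 2) ^ n)⁻¹ : ℝ) : ℂ) • vectorFunctional π (v n)
  have hp : ∀ n, IsPosFnC (p n) := fun n =>
    ((isPosFnC_vectorFunctional π _).smul (by positivity)).add
      ((isPosFnC_vectorFunctional π _).smul (by positivity))
  have hpg : ∀ n, IsDominatedBy (p n) g := fun n =>
    (IsDominatedBy.smul (hu n) (by positivity)).add (IsDominatedBy.smul (hv n) (by positivity))
  have hp_norm : ∀ a n, ‖p n a‖ ≤ ‖a‖ * (D ^ 2 + C ^ 2) * (1 / 2) ^ n := fun a n => by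
    calc ‖p n a‖ ≤ (1 / 2) ^ n * (‖a‖ * ‖u n‖ ^ 2) + ((1 / 2) ^ n)⁻¹ * (‖a‖ * ‖v n‖ ^ 2) := by
          refine (norm_add_le _ _).trans (add_le_add ?_ ?_) <;>
            rw [LinearMap.smul_apply, norm_smul, Complex.norm_of_nonneg (by positivity)] <;>
            gcongr <;> exact norm_vectorFunctional_apply_le π _ a
      _ ≤ (1 / 2) ^ n * (‖a‖ * D ^ 2) + ((1 / 2) ^ n)⁻¹ * (‖a‖ * (C * (1 / 2) ^ n) ^ 2) := by
          gcongr
          exacts [hD n, hC n]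
      _ = ‖a‖ * (D ^ 2 + C ^ 2) * (1 / 2) ^ n := by
          field_simp
  obtain ⟨P, hP⟩ := exists_hasSum_of_summable fun a =>
    Summable.of_norm_bounded (summable_geometric_two.mul_left _) (hp_norm a)
  refine ⟨P, isPosFnC_of_hasSum hp hP, absContC_of_hasSum hg hp hpg hP,
    absContC_add_of_fnLEC_add hg hp (fun n => isPosFnC_vectorFunctional π (u n)) hpg hu hP
      (fun a => hlim.inner ((π a).continuous.tendsto _ |>.comp hlim)) fun n => ?_⟩
  simpa only [hu_def, Finset.sum_range_succ] using
    fnLEC_vectorFunctional_add_add (u n) (v n) (by positivity)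

end Closure

section Restriction

variable {A B : Type} [NonUnitalCStarAlgebra A] [NonUnitalCStarAlgebra B] {j : B →⋆ₙₐ[ℂ] A}
  {H : Type*} [NormedAddCommGroup H] [InnerProductSpace ℂ H] [CompleteSpace H]
  {H' : Type*} [NormedAddCommGroup H'] [InnerProductSpace ℂ H'] [CompleteSpace H']
  {g : B →ₗ[ℂ] ℂ}

theorem vectorFunctional_comp (ρ : A →⋆ₙₐ[ℂ] (H →L[ℂ] H)) (j : B →⋆ₙₐ[ℂ] A) (v : H) :
    vectorFunctional (ρ.comp j) v = vectorFunctional ρ v ∘ₗ (j : B →ₗ[ℂ] A) := rfl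

-- A functional `p = vectorFunctional σ ζ` below both vanishes on `j(B)`, so `σ (j e) ζ = 0` and
-- `‖σ a ζ‖ = ‖σ (a - a * j e) ζ‖ ≤ ‖ρ a (η - ρ (j e) η)‖`.
theorem SingularC.vectorFunctional_of_comp {ρ : A →⋆ₙₐ[ℂ] (H →L[ℂ] H)} {η : H}
    (hsing : SingularC (vectorFunctional (ρ.comp j) η) g) (hg : IsPosFnC g)
    (hη : η ∈ closure (Set.range fun e => ρ (j e) η)) {G : A →ₗ[ℂ] ℂ}
    (hG : IsDominatedBy (G ∘ₗ (j : B →ₗ[ℂ] A)) g) : SingularC (vectorFunctional ρ η) G := by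
  intro p hp hpη hpG
  have hpj : p ∘ₗ (j : B →ₗ[ℂ] A) = 0 :=
    hsing.eq_zero_of_isDominatedBy hg (hp.comp j) (hpη.comp j) (.of_fnLEC (hpG.comp j) hG)
  obtain ⟨K, _, _, _, σ, ζ, -, rfl⟩ := hp.exists_eq_vectorFunctional
  have hσj : ∀ e, σ (j e) ζ = 0 := fun e => by
    have := vectorFunctional_star_mul_self (σ.comp j) ζ e
    rw [vectorFunctional_comp, hpj] at this
    simpa using this.symm
  have hle : ∀ a v, v ∈ Set.range (fun e => ρ (j e) η) → ‖σ a ζ‖ ≤ ‖ρ a (η - v)‖ := by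
    rintro a _ ⟨e, rfl⟩
    have h := fnLEC_iff.1 hpη (a - a * j e)
    simp only [vectorFunctional_star_mul_self, Complex.real_le_real, map_sub, sub_apply,
      rep_mul_apply, hσj, map_zero, sub_zero] at h
    rw [map_sub]
    exact (sq_le_sq₀ (norm_nonneg _) (norm_nonneg _)).1 h
  have hσ : ∀ a, σ a ζ = 0 := fun a => by
    have hclosed : IsClosed {v | ‖σ a ζ‖ ≤ ‖ρ a (η - v)‖} :=
      isClosed_le (by fun_prop) (by fun_prop)
    have hζ : ‖σ a ζ‖ ≤ ‖ρ a (η - η)‖ := closure_minimal (hle a) hclosed hη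
    simpa using hζ
  exact eq_of_forall_star_mul_self_eq fun a => by simp [vectorFunctional_star_mul_self, hσ]

theorem LebDecompUniqueC.vectorFunctional_eq_zero (hA : LebDecompUniqueC A)
    {ρ : A →⋆ₙₐ[ℂ] (H →L[ℂ] H)} {η : H} (hg : IsPosFnC g)
    (hηg : η ∈ (dominatedVectors (ρ.comp j) g).topologicalClosure)
    (hsing : SingularC (vectorFunctional (ρ.comp j) η) g)
    (hη : η ∈ closure (Set.range fun e => ρ (j e) η)) : vectorFunctional ρ η = 0 := by
  obtain ⟨u, hu, hlim⟩ := mem_closure_iff_seq_limit.1 hηg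
  obtain ⟨G, hG, huG, hGg⟩ := exists_isPosFnC_forall_isDominatedBy j hg
    (fun n => isPosFnC_vectorFunctional ρ (u n)) hu
  have hηG : η ∈ (dominatedVectors ρ G).topologicalClosure :=
    mem_closure_iff_seq_limit.2 ⟨u, huG, hlim⟩
  obtain ⟨P, hP, hPG, hPηG⟩ := exists_absContC_add_vectorFunctional hG hηG
  exact hA.eq_zero_of_singularC hG hP (isPosFnC_vectorFunctional ρ η) hPG hPηG
    (hsing.vectorFunctional_of_comp hg hη hGg)

theorem IsCyclicVector.exists_linearIsometry_intertwiner {π : B →⋆ₙₐ[ℂ] (H →L[ℂ] H)}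
    {π' : B →⋆ₙₐ[ℂ] (H' →L[ℂ] H')} {ξ : H} {ξ' : H'} (hξ : IsCyclicVector π ξ)
    (heq : vectorFunctional π' ξ' = vectorFunctional π ξ) :
    ∃ V : H →ₗᵢ[ℂ] H', ∀ b v, V (π b v) = π' b (V v) := by
  obtain ⟨J, -, hJ, hJπ⟩ := hξ.exists_intertwiner (by rw [heq]; exact .refl _)
  refine ⟨⟨(J : H →ₗ[ℂ] H'), fun v => ?_⟩, hJπ⟩
  refine hξ.induction_on v (isClosed_eq (by fun_prop) (by fun_prop)) fun b => ?_
  have hnorm := vectorFunctional_star_mul_self π' ξ' b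
  rw [heq, vectorFunctional_star_mul_self, Complex.ofReal_inj] at hnorm
  change ‖J (π b ξ)‖ = ‖π b ξ‖
  rw [hJ]
  exact ((sq_eq_sq₀ (norm_nonneg _) (norm_nonneg _)).1 hnorm).symm

theorem vectorFunctional_linearIsometry {π : B →⋆ₙₐ[ℂ] (H →L[ℂ] H)}
    {π' : B →⋆ₙₐ[ℂ] (H' →L[ℂ] H')} {V : H →ₗᵢ[ℂ] H'} (hV : ∀ b v, V (π b v) = π' b (V v))
    (v : H) : vectorFunctional π' (V v) = vectorFunctional π v := by
  ext b
  rw [vectorFunctional_apply, ← hV, V.inner_map_map, vectorFunctional_apply]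

theorem LebDecompUniqueC.eq_zero_of_mem_closure_dominatedVectors (hA : LebDecompUniqueC A)
    (hj : Function.Injective j) {π : B →⋆ₙₐ[ℂ] (H →L[ℂ] H)} {ξ η : H} (hξ : IsCyclicVector π ξ)
    (hg : IsPosFnC g) (hη : η ∈ (dominatedVectors π g).topologicalClosure)
    (hsing : SingularC (vectorFunctional π η) g) : η = 0 := by
  obtain ⟨F, hF, hFj⟩ := (isPosFnC_vectorFunctional π ξ).exists_extension j hj
  obtain ⟨K, _, _, _, ρ, ζ, -, rfl⟩ := hF.exists_eq_vectorFunctional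
  obtain ⟨V, hV⟩ := hξ.exists_linearIsometry_intertwiner (π' := ρ.comp j) hFj
  have hVg : ∀ v ∈ dominatedVectors π g, V v ∈ dominatedVectors (ρ.comp j) g := fun v hv => by
    rwa [mem_dominatedVectors, vectorFunctional_linearIsometry hV]
  have hVη : V η ∈ closure (Set.range fun e => ρ (j e) (V η)) :=
    map_mem_closure V.continuous (hξ.mem_closure_range η) (by
      rintro _ ⟨e, rfl⟩
      exact ⟨e, (hV e η).symm⟩)
  have hzero : vectorFunctional ρ (V η) = 0 :=
    hA.vectorFunctional_eq_zero hg (map_mem_closure V.continuous hη hVg)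
      (by rwa [vectorFunctional_linearIsometry hV]) hVη
  refine hξ.eq_zero_of_vectorFunctional_eq_zero ?_
  rw [← vectorFunctional_linearIsometry hV, vectorFunctional_comp, hzero, LinearMap.zero_comp]

theorem LebDecompUniqueC.of_injective (hA : LebDecompUniqueC A) (j : B →⋆ₙₐ[ℂ] A)
    (hj : Function.Injective j) : LebDecompUniqueC B := by
  intro f g hf hg
  obtain ⟨H, _, _, _, π, ξ, hξ, hfg⟩ := (hf.add hg).exists_eq_vectorFunctional
  obtain ⟨T, hT⟩ := hξ.exists_isRadonNikodym hg
    (by rw [← hfg, add_comm]; exact hf.fnLEC_add_right)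
  obtain ⟨w, hTw, hw, hw'⟩ := hT.exists_mem_ker hg
  have singular_part_eq : ∀ r s, IsLebDecompC f g r s →
      ∀ a, s (star a * a) = inner ℂ (π a ξ) (π a w) := by
    intro r s hrs a
    obtain ⟨η, hη, hηs, hs⟩ := hrs.exists_vector hg hξ hfg.symm hT hTw hw hw'
    have hη0 : η = 0 := hA.eq_zero_of_mem_closure_dominatedVectors hj hξ hg hη
      (hrs.2.2.2.2.mono_left hηs)
    rw [hs, hη0, zero_add]
  intro r s r' s' hrs hrs'
  have hss' : s = s' := eq_of_forall_star_mul_self_eq fun a => by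
    rw [singular_part_eq r s hrs, singular_part_eq r' s' hrs']
  refine ⟨add_right_cancel (b := s) ?_, hss'⟩
  rw [← hrs.2.2.1, hrs'.2.2.1, hss']

end Restriction

/-- **Proposition 2.16**: the Lebesgue decomposition of positive functionals over a
C⋆-algebra `A` is unique if and only if it is unique over every closed `⋆`-subalgebra
of `A`. -/
theorem cstar_lebesgue_unique_iff_forall_closed_subalgebra
    (A : Type) [NonUnitalCStarAlgebra A] :
    LebDecompUniqueC A ↔
      ∀ (B : NonUnitalStarSubalgebra ℂ A) [IsClosed (B : Set A)],
        LebDecompUniqueC ↥B := by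
  refine ⟨fun hA B _ =>
    hA.of_injective (NonUnitalStarSubalgebraClass.subtype B) Subtype.val_injective, fun h => ?_⟩
  have : IsClosed ((⊤ : NonUnitalStarSubalgebra ℂ A) : Set A) := isClosed_univ
  exact (h ⊤).of_injective
    (NonUnitalStarAlgHom.codRestrict (NonUnitalStarAlgHom.id ℂ A) ⊤
      fun _ => NonUnitalStarAlgebra.mem_top)
    fun _ _ => congrArg Subtype.val
end

section
/- Let 𝒜 be a C*-algebra with a dense *-subalgebra 𝒟, and let f, g be positive functionals on 𝒜 (the restrictions f|_𝒟 and g|_𝒟 are representable positive functionals on the *-algebra 𝒟). Then: (1) f ≤ g if and only if f|_𝒟 ≤ g|_𝒟; (2) f is absolutely continuous with respect to g if and only if f|_𝒟 is absolutely continuous with respect to g|_𝒟. -/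
open scoped ComplexOrder InnerProductSpace

section StarAlgebraDefs

variable {A : Type} [NonUnitalRing A] [Module ℂ A] [SMulCommClass ℂ A A]
  [IsScalarTower ℂ A A] [StarRing A] [StarModule ℂ A]

/-- A linear functional on a `⋆`-algebra is positive if `0 ≤ f (a⋆ * a)` for every `a`. -/
def IsPosFn (f : A →ₗ[ℂ] ℂ) : Prop := ∀ a : A, 0 ≤ f (star a * a)

/-- Order on positive functionals: `f ≤ g` iff `g - f` is positive. -/
def FnLE (f g : A →ₗ[ℂ] ℂ) : Prop := IsPosFn (g - f)

/-- `f` is induced by a `⋆`-representation on the Hilbert space `H` with a cyclic vector. -/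
def IsRepOn (f : A →ₗ[ℂ] ℂ) (H : Type) [NormedAddCommGroup H]
    [InnerProductSpace ℂ H] [CompleteSpace H] : Prop :=
  ∃ (π : A →⋆ₙₐ[ℂ] (H →L[ℂ] H)) (ξ : H),
    DenseRange (fun a : A => π a ξ) ∧ ∀ a : A, f a = ⟪ξ, π a ξ⟫_ℂ

/-- A positive linear functional is representable if it is induced by a cyclic
`⋆`-representation on some complex Hilbert space. -/
def IsRepresentable (f : A →ₗ[ℂ] ℂ) : Prop :=
  ∃ (H : Type) (_ : NormedAddCommGroup H) (_ : InnerProductSpace ℂ H) (_ : CompleteSpace H),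
    IsRepOn f H

/-- Absolute continuity `f ≪ g` for representable positive functionals: `f` is the pointwise
limit of an increasing sequence of representable positive functionals `fₙ` with
`fₙ ≤ αₙ • g` for some positive reals `αₙ`. -/
def AbsContR (f g : A →ₗ[ℂ] ℂ) : Prop :=
  ∃ (fn : ℕ → (A →ₗ[ℂ] ℂ)) (α : ℕ → ℝ),
    (∀ n, IsRepresentable (fn n) ∧ IsPosFn (fn n)) ∧
    (∀ n, 0 < α n) ∧
    (∀ n, FnLE (fn n) (fn (n + 1))) ∧
    (∀ n, FnLE (fn n) (((α n : ℂ)) • g)) ∧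
    (∀ a : A, Filter.Tendsto (fun n => fn n a) Filter.atTop (nhds (f a)))

/-- Singularity `f ⊥ g` for representable positive functionals: the only representable
positive functional dominated by both `f` and `g` is `0`. -/
def SingularR (f g : A →ₗ[ℂ] ℂ) : Prop :=
  ∀ p : A →ₗ[ℂ] ℂ, IsRepresentable p → IsPosFn p → FnLE p f → FnLE p g → p = 0

/-- `f = fr + fs` is a Lebesgue decomposition of `f` with respect to `g` (representable
positive functionals). -/
def IsLebDecompR (f g fr fs : A →ₗ[ℂ] ℂ) : Prop :=
  IsRepresentable fr ∧ IsPosFn fr ∧ IsRepresentable fs ∧ IsPosFn fs ∧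
    f = fr + fs ∧ AbsContR fr g ∧ SingularR fs g

/-- The Lebesgue decomposition of `f` with respect to `g` is unique. -/
def LebDecompUniqueForR (f g : A →ₗ[ℂ] ℂ) : Prop :=
  ∀ fr fs fr' fs' : A →ₗ[ℂ] ℂ, IsLebDecompR f g fr fs → IsLebDecompR f g fr' fs' →
    fr = fr' ∧ fs = fs'

end StarAlgebraDefs

/-- The Lebesgue decomposition of representable positive functionals over `A` is unique. -/
def LebDecompUniqueR (A : Type) [NonUnitalRing A] [Module ℂ A] [SMulCommClass ℂ A A]
    [IsScalarTower ℂ A A] [StarRing A] [StarModule ℂ A] : Prop :=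
  ∀ f g : A →ₗ[ℂ] ℂ, IsRepresentable f → IsPosFn f → IsRepresentable g → IsPosFn g →
    LebDecompUniqueForR f g

/-- Restriction of a linear functional on `A` to a `⋆`-subalgebra `𝒟 ⊆ A`. -/
def restrictFn {A : Type} [NonUnitalCStarAlgebra A] (D : NonUnitalStarSubalgebra ℂ A)
    (f : A →ₗ[ℂ] ℂ) : ↥D →ₗ[ℂ] ℂ where
  toFun d := f d
  map_add' x y := by simp
  map_smul' c x := by simp

/-!
Positivity and the order are closed conditions, so for continuous functionals they can be tested
on `𝒟`. Restricting an approximating sequence from `𝒜` to `𝒟` preserves representability because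
the GNS representation of a positive functional has a cyclic vector. Conversely, a representable
functional on `𝒟` dominated by a bounded one is bounded, so an approximating sequence on `𝒟`
extends to `𝒜`. The extensions `Gₙ` are positive with `Gₙ ≤ f`, hence `‖Gₙ‖ ≤ ‖f‖`, and
this equicontinuity propagates the convergence `Gₙ → f` from `𝒟` to `𝒜`.
-/

section BoundedLinearMap

open Filter Topology

theorem tendsto_apply_of_dense_of_norm_le {𝕜 E F ι : Type*} [NontriviallyNormedField 𝕜]
    [SeminormedAddCommGroup E] [SeminormedAddCommGroup F] [NormedSpace 𝕜 E] [NormedSpace 𝕜 F]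
    {l : Filter ι} {u : ι → E →L[𝕜] F} {v : E →L[𝕜] F} {s : Set E} {C : ℝ}
    (hs : Dense s) (hu : ∀ i, ‖u i‖ ≤ C) (hlim : ∀ x ∈ s, Tendsto (u · x) l (𝓝 (v x))) (x : E) :
    Tendsto (u · x) l (𝓝 (v x)) := by
  have hequi : Equicontinuous ((↑) ∘ u : ι → E → F) :=
    ((NormedSpace.equicontinuous_TFAE u).out 5 1).mp (⟨C, hu⟩ : ∃ C, ∀ i, ‖u i‖ ≤ C)
  have isClosed_tendsto := hequi.isClosed_setOfPred_tendsto (l := l) v.continuous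
  exact isClosed_tendsto.closure_subset_iff.mpr hlim (hs x)

theorem re_apply_star_mul_self_le {A : Type*} [NonUnitalSeminormedRing A] [StarRing A]
    [NormedStarGroup A] [NormedSpace ℂ A] (f : A →L[ℂ] ℂ) (a : A) :
    (f (star a * a)).re ≤ ‖f‖ * ‖a‖ ^ 2 :=
  calc (f (star a * a)).re ≤ ‖f (star a * a)‖ := Complex.re_le_norm _
    _ ≤ ‖f‖ * ‖star a * a‖ := f.le_opNorm _
    _ ≤ ‖f‖ * (‖star a‖ * ‖a‖) := by gcongr; exact norm_mul_le (star a) a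
    _ = ‖f‖ * ‖a‖ ^ 2 := by rw [norm_star, pow_two]

end BoundedLinearMap

section StarAlgebra

open Filter Topology

variable {A : Type} [NonUnitalRing A] [Module ℂ A] [StarRing A]

theorem IsRepresentable.exists_norm_apply_le_mul_sqrt {f : A →ₗ[ℂ] ℂ} (hf : IsRepresentable f) :
    ∃ C : ℝ, 0 ≤ C ∧ ∀ a, ‖f a‖ ≤ C * √(f (star a * a)).re := by
  obtain ⟨H, _, _, _, π, ξ, -, hπ⟩ := hf
  have norm_eq (a : A) : ‖π a ξ‖ = √(f (star a * a)).re := by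
    rw [hπ, map_mul, map_star, ContinuousLinearMap.star_eq_adjoint,
      mul_apply_eq_comp, ContinuousLinearMap.adjoint_inner_right]
    exact norm_eq_sqrt_re_inner (𝕜 := ℂ) (π a ξ)
  refine ⟨‖ξ‖, norm_nonneg ξ, fun a => ?_⟩
  rw [← norm_eq, hπ]
  exact norm_inner_le_norm ξ (π a ξ)

theorem fnLE_of_tendsto {u : ℕ → A →ₗ[ℂ] ℂ} {f : A →ₗ[ℂ] ℂ}
    (hmono : ∀ n, FnLE (u n) (u (n + 1)))
    (hlim : ∀ a, Tendsto (fun n => u n a) atTop (𝓝 (f a))) (n : ℕ) : FnLE (u n) f := fun a =>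
  have monotone_apply : Monotone fun n => u n (star a * a) :=
    monotone_nat_of_le_succ fun n => sub_nonneg.mp (hmono n a)
  sub_nonneg.mpr (monotone_apply.ge_of_tendsto (hlim (star a * a)) n)

end StarAlgebra

section GNS

open UniformSpace

variable {A : Type*} [NonUnitalCStarAlgebra A] [PartialOrder A] [StarOrderedRing A]
  {P : A →ₚ[ℂ] ℂ}

theorem denseRange_coe_toPreGNS : DenseRange fun a : A => (P.toPreGNS a : P.GNS) :=
  Completion.denseRange_coe.comp P.toPreGNS.surjective.denseRange (Completion.continuous_coe _)

theorem gnsNonUnitalStarAlgHom_apply_eq_coe_toPreGNS {ξ : P.GNS}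
    (hξ : ∀ a, ⟪ξ, (P.toPreGNS a : P.GNS)⟫_ℂ = P a) (a : A) :
    P.gnsNonUnitalStarAlgHom a ξ = P.toPreGNS a := by
  refine ext_inner_right ℂ fun y => ?_
  induction y using Completion.induction_on with
  | hp => apply isClosed_eq <;> fun_prop
  | ih y =>
    calc ⟪P.gnsNonUnitalStarAlgHom a ξ, (y : P.GNS)⟫_ℂ
        = ⟪ξ, P.gnsNonUnitalStarAlgHom (star a) y⟫_ℂ := by
          rw [map_star, ContinuousLinearMap.star_eq_adjoint,
            ContinuousLinearMap.adjoint_inner_right]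
      _ = P (star a * P.ofPreGNS y) := by
          rw [P.gnsNonUnitalStarAlgHom_apply_coe, P.leftMulMapPreGNS_apply, hξ]
      _ = ⟪(P.toPreGNS a : P.GNS), y⟫_ℂ := by
          rw [Completion.inner_coe, P.preGNS_inner_def, P.ofPreGNS_toPreGNS]

end GNS

section PositiveFunctional

open Filter Topology

variable {A : Type} [NonUnitalCStarAlgebra A]

theorem IsPosFnC.exists_positiveLinearMap [PartialOrder A] [StarOrderedRing A] {f : A →ₗ[ℂ] ℂ}
    (hf : IsPosFnC f) : ∃ P : A →ₚ[ℂ] ℂ, P.toLinearMap = f := by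
  refine ⟨PositiveLinearMap.mk₀ f fun x hx => ?_, rfl⟩
  obtain ⟨a, rfl⟩ := CStarAlgebra.nonneg_iff_eq_star_mul_self.mp hx
  exact hf a

theorem IsPosFnC.continuous {f : A →ₗ[ℂ] ℂ} (hf : IsPosFnC f) : Continuous f := by
  let _ : PartialOrder A := CStarAlgebra.spectralOrder A
  have _ : StarOrderedRing A := CStarAlgebra.spectralOrderedRing A
  obtain ⟨P, rfl⟩ := hf.exists_positiveLinearMap
  exact map_continuous P

theorem IsPosFnC.norm_apply_star_mul_le_sqrt_mul_sqrt {f : A →ₗ[ℂ] ℂ} (hf : IsPosFnC f) (a b : A) :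
    ‖f (star a * b)‖ ≤ √(f (star a * a)).re * √(f (star b * b)).re := by
  let _ : PartialOrder A := CStarAlgebra.spectralOrder A
  have _ : StarOrderedRing A := CStarAlgebra.spectralOrderedRing A
  obtain ⟨P, rfl⟩ := hf.exists_positiveLinearMap
  exact norm_inner_le_norm (𝕜 := ℂ) (P.toPreGNS a) (P.toPreGNS b)

/- In a unital algebra this is the Cauchy–Schwarz inequality for `1` and `a`; in general an
approximate unit plays the role of `1`. -/
theorem IsPosFnC.norm_apply_le_sqrt_mul_sqrt {f : A →L[ℂ] ℂ} (hf : IsPosFnC (f : A →ₗ[ℂ] ℂ))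
    (a : A) : ‖f a‖ ≤ √‖f‖ * √(f (star a * a)).re := by
  let _ : PartialOrder A := CStarAlgebra.spectralOrder A
  have _ : StarOrderedRing A := CStarAlgebra.spectralOrderedRing A
  have hunit := CStarAlgebra.increasingApproximateUnit A
  have hlim : Tendsto (fun e => ‖f (e * a)‖) (CStarAlgebra.approximateUnit A) (𝓝 ‖f a‖) :=
    ((f.continuous.tendsto a).comp (hunit.tendsto_mul_right a)).norm
  refine le_of_tendsto hlim ?_
  filter_upwards [hunit.eventually_norm, hunit.eventually_star_eq] with e norm_e star_e
  have re_le : (f (star e * e)).re ≤ ‖f‖ :=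
    (re_apply_star_mul_self_le f e).trans
      (mul_le_of_le_one_right (norm_nonneg f) (pow_le_one₀ (norm_nonneg e) norm_e))
  calc ‖f (e * a)‖ = ‖f (star e * a)‖ := by rw [star_e]
    _ ≤ √(f (star e * e)).re * √(f (star a * a)).re := hf.norm_apply_star_mul_le_sqrt_mul_sqrt e a
    _ ≤ √‖f‖ * √(f (star a * a)).re := by gcongr

theorem IsPosFnC.norm_le_of_fnLEC {f g : A →L[ℂ] ℂ} (hf : IsPosFnC (f : A →ₗ[ℂ] ℂ))
    (hfg : FnLEC (f : A →ₗ[ℂ] ℂ) g) : ‖f‖ ≤ ‖g‖ := by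
  have norm_le_sqrt : ‖f‖ ≤ √(‖f‖ * ‖g‖) := by
    refine f.opNorm_le_bound (Real.sqrt_nonneg _) fun a => ?_
    have re_le : (f (star a * a)).re ≤ ‖g‖ * ‖a‖ ^ 2 :=
      (sub_nonneg.mp (hfg a)).1.trans (re_apply_star_mul_self_le g a)
    calc ‖f a‖ ≤ √‖f‖ * √(f (star a * a)).re := hf.norm_apply_le_sqrt_mul_sqrt a
      _ ≤ √‖f‖ * √(‖g‖ * ‖a‖ ^ 2) := by gcongr
      _ = √(‖f‖ * ‖g‖) * ‖a‖ := by
        rw [Real.sqrt_mul (norm_nonneg g), Real.sqrt_sq (norm_nonneg a),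
          Real.sqrt_mul (norm_nonneg f), mul_assoc]
  have sq_le : ‖f‖ ^ 2 ≤ ‖f‖ * ‖g‖ := (Real.le_sqrt (norm_nonneg f) (by positivity)).mp norm_le_sqrt
  rcases (norm_nonneg f).eq_or_lt with norm_zero | norm_pos
  · exact norm_zero ▸ norm_nonneg g
  · exact le_of_mul_le_mul_left (pow_two ‖f‖ ▸ sq_le) norm_pos

theorem exists_inner_coe_toPreGNS_eq [PartialOrder A] [StarOrderedRing A] (P : A →ₚ[ℂ] ℂ) :
    ∃ ξ : P.GNS, ∀ a, ⟪ξ, (P.toPreGNS a : P.GNS)⟫_ℂ = P a := by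
  let f : A →L[ℂ] ℂ := ⟨P.toLinearMap, map_continuous P⟩
  have hf : IsPosFnC (f : A →ₗ[ℂ] ℂ) := fun a => P.map_nonneg (star_mul_self_nonneg a)
  let e : A →ₗ[ℂ] P.GNS :=
    (UniformSpace.Completion.toComplL (𝕜 := ℂ) (E := P.PreGNS)).toLinearMap ∘ₗ
      P.toPreGNS.toLinearMap
  have norm_le (a : A) : ‖f a‖ ≤ √‖f‖ * ‖e a‖ := by
    have norm_e : ‖e a‖ = √(f (star a * a)).re := UniformSpace.Completion.norm_coe (P.toPreGNS a)
    exact norm_e ▸ hf.norm_apply_le_sqrt_mul_sqrt a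
  refine ⟨(InnerProductSpace.toDual ℂ P.GNS).symm (P.toLinearMap.extendOfNorm e), fun a => ?_⟩
  rw [InnerProductSpace.toDual_symm_apply]
  exact LinearMap.extendOfNorm_eq denseRange_coe_toPreGNS ⟨_, norm_le⟩ a

theorem IsPosFnC.isRepresentable {f : A →ₗ[ℂ] ℂ} (hf : IsPosFnC f) : IsRepresentable f := by
  let _ : PartialOrder A := CStarAlgebra.spectralOrder A
  have _ : StarOrderedRing A := CStarAlgebra.spectralOrderedRing A
  obtain ⟨P, rfl⟩ := hf.exists_positiveLinearMap
  obtain ⟨ξ, hξ⟩ := exists_inner_coe_toPreGNS_eq P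
  have apply_ξ := gnsNonUnitalStarAlgHom_apply_eq_coe_toPreGNS hξ
  refine ⟨P.GNS, inferInstance, inferInstance, inferInstance, P.gnsNonUnitalStarAlgHom, ξ, ?_,
    fun a => ?_⟩
  · simpa only [apply_ξ] using denseRange_coe_toPreGNS (P := P)
  · rw [apply_ξ, hξ]
    rfl

end PositiveFunctional

section Restriction

variable {A : Type} [NonUnitalCStarAlgebra A] {D : NonUnitalStarSubalgebra ℂ A}

theorem IsRepresentable.restrictFn_of_dense (hD : Dense (D : Set A)) {f : A →ₗ[ℂ] ℂ}
    (hf : IsRepresentable f) : IsRepresentable (restrictFn D f) := by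
  obtain ⟨H, _, _, _, π, ξ, hξ, hπ⟩ := hf
  have continuous_π : Continuous π :=
    AddMonoidHomClass.continuous_of_bound π 1 fun a => by
      simpa only [one_mul] using NonUnitalStarAlgHom.norm_apply_le π a
  exact ⟨H, inferInstance, inferInstance, inferInstance,
    π.comp (NonUnitalStarSubalgebraClass.subtype D), ξ,
    hξ.comp hD.denseRange_val (by fun_prop), fun d => hπ d⟩

theorem isPosFn_restrictFn_iff (hD : Dense (D : Set A)) {f : A →ₗ[ℂ] ℂ} (hf : Continuous f) :
    IsPosFn (restrictFn D f) ↔ IsPosFnC f := by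
  refine ⟨fun h a => ?_, fun h d => h d⟩
  refine hD.denseRange_val.induction_on (p := fun a => 0 ≤ f (star a * a)) a ?_ h
  exact isClosed_le continuous_const (hf.comp (by fun_prop))

theorem fnLE_restrictFn_iff (hD : Dense (D : Set A)) {f g : A →ₗ[ℂ] ℂ} (hf : Continuous f)
    (hg : Continuous g) : FnLE (restrictFn D f) (restrictFn D g) ↔ FnLEC f g :=
  isPosFn_restrictFn_iff hD (f := g - f) (hg.sub hf)

theorem AbsContC.absContR_restrictFn (hD : Dense (D : Set A)) {f g : A →ₗ[ℂ] ℂ}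
    (h : AbsContC f g) : AbsContR (restrictFn D f) (restrictFn D g) := by
  obtain ⟨u, α, hpos, hα, hmono, hle, hlim⟩ := h
  exact ⟨fun n => restrictFn D (u n), α,
    fun n => ⟨(hpos n).isRepresentable.restrictFn_of_dense hD, fun d => hpos n d⟩, hα,
    fun n d => hmono n d, fun n d => hle n d, fun d => hlim d⟩

theorem IsRepresentable.exists_restrictFn_eq (hD : Dense (D : Set A)) {u : D →ₗ[ℂ] ℂ}
    (hu : IsRepresentable u) {g : A →L[ℂ] ℂ} (hle : FnLE u (restrictFn D g)) :
    ∃ f : A →L[ℂ] ℂ, restrictFn D f = u := by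
  obtain ⟨C, C_nonneg, hC⟩ := hu.exists_norm_apply_le_mul_sqrt
  have norm_le (d : D) : ‖u d‖ ≤ C * √‖g‖ * ‖(d : A)‖ := by
    have re_le : (u (star d * d)).re ≤ ‖g‖ * ‖(d : A)‖ ^ 2 :=
      (sub_nonneg.mp (hle d)).1.trans (re_apply_star_mul_self_le g (d : A))
    calc ‖u d‖ ≤ C * √(u (star d * d)).re := hC d
      _ ≤ C * √(‖g‖ * ‖(d : A)‖ ^ 2) := by gcongr
      _ = C * √‖g‖ * ‖(d : A)‖ := by
        rw [Real.sqrt_mul (norm_nonneg g), Real.sqrt_sq (norm_nonneg _), mul_assoc]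
  let e : D →ₗ[ℂ] A := NonUnitalStarSubalgebraClass.subtype D
  exact ⟨u.extendOfNorm e,
    LinearMap.ext fun d => LinearMap.extendOfNorm_eq (e := e) hD.denseRange_val ⟨_, norm_le⟩ d⟩

theorem absContC_of_absContR_restrictFn (hD : Dense (D : Set A)) {f g : A →L[ℂ] ℂ}
    (h : AbsContR (restrictFn D f) (restrictFn D g)) : AbsContC (f : A →ₗ[ℂ] ℂ) g := by
  obtain ⟨u, α, hpos, hα, hmono, hle, hlim⟩ := h
  choose G hG using fun n =>
    (hpos n).1.exists_restrictFn_eq hD (g := (α n : ℂ) • g) (hle n)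
  obtain rfl : (fun n => restrictFn D (G n)) = u := funext hG
  have G_pos (n : ℕ) : IsPosFnC (G n : A →ₗ[ℂ] ℂ) :=
    (isPosFn_restrictFn_iff hD (G n).continuous).mp (hpos n).2
  have G_le (n : ℕ) : FnLEC (G n : A →ₗ[ℂ] ℂ) f :=
    (fnLE_restrictFn_iff hD (G n).continuous f.continuous).mp (fnLE_of_tendsto hmono hlim n)
  refine ⟨fun n => G n, α, G_pos, hα, fun n => ?_, fun n => ?_, ?_⟩
  · exact (fnLE_restrictFn_iff hD (G n).continuous (G (n + 1)).continuous).mp (hmono n)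
  · exact (fnLE_restrictFn_iff hD (G n).continuous (g.continuous.const_smul _)).mp (hle n)
  · exact tendsto_apply_of_dense_of_norm_le hD (fun n => (G_pos n).norm_le_of_fnLEC (G_le n))
      fun d hd => hlim ⟨d, hd⟩

theorem cstar_dense_subalgebra_restriction_general (hD : Dense (D : Set A)) (f g : A →L[ℂ] ℂ) :
    (FnLEC (f : A →ₗ[ℂ] ℂ) g ↔ FnLE (restrictFn D f) (restrictFn D g)) ∧
      (AbsContC (f : A →ₗ[ℂ] ℂ) g ↔ AbsContR (restrictFn D f) (restrictFn D g)) :=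
  ⟨(fnLE_restrictFn_iff hD f.continuous g.continuous).symm,
    AbsContC.absContR_restrictFn hD, absContC_of_absContR_restrictFn hD⟩

end Restriction

/-- **Lemma 2.20**: for a C⋆-algebra `𝒜` with a dense `⋆`-subalgebra `𝒟` and positive
functionals `f, g` on `𝒜`: (1) `f ≤ g` iff `f|𝒟 ≤ g|𝒟`; (2) `f ≪ g` iff
`f|𝒟 ≪ g|𝒟` (as representable positive functionals on `𝒟`). -/
theorem cstar_dense_subalgebra_restriction
    {A : Type} [NonUnitalCStarAlgebra A]
    (D : NonUnitalStarSubalgebra ℂ A) (hD : Dense (D : Set A))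
    (f g : A →ₗ[ℂ] ℂ) (hf : IsPosFnC f) (hg : IsPosFnC g) :
    (FnLEC f g ↔ FnLE (restrictFn D f) (restrictFn D g)) ∧
      (AbsContC f g ↔ AbsContR (restrictFn D f) (restrictFn D g)) :=
  cstar_dense_subalgebra_restriction_general hD ⟨f, hf.continuous⟩ ⟨g, hg.continuous⟩
end
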